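/- Let (X,f) be a TDS, φ: X → ℝ continuous, and μ ∈ M(X,f). Then P_μ(f,φ) = ess sup{h_μ(x) + φ*(x) : x ∈ X}, with the essential supremum taken with respect to μ. If in addition μ is ergodic, then P_μ(f,φ,x) = P_μ(f,φ) = h_μ(f) + ∫_X φ dμ for μ-almost every x ∈ X. -/

import Mathlib

open MeasureTheory Filter Set
open scoped ENNReal NNReal

namespace Paper

variable {X : Type*}

/-- Birkhoff sum `S_n φ(x) = ∑_{i<n} φ(f^i x)`. -/
def birk (f : X → X) (φ : X → ℝ) (n : ℕ) (x : X) : ℝ :=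
  ∑ i ∈ Finset.range n, φ (f^[i] x)

section Metric

variable [MetricSpace X]

/-- The Bowen ball `B_n(x, ε) = {y : d_n(x,y) < ε}`. -/
def bowenBall (f : X → X) (x : X) (n : ℕ) (ε : ℝ) : Set X :=
  {y | ∀ i < n, dist (f^[i] x) (f^[i] y) < ε}

/-- The number of indices `0 ≤ j ≤ n-1` with `dist (f^j x, f^j y) > ε`. -/
noncomputable def sepCount (f : X → X) (ε : ℝ) (n : ℕ) (x y : X) : ℕ :=
  Nat.card {j : ℕ // j < n ∧ ε < dist (f^[j] x) (f^[j] y)}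

/-- `A` is an `(n,ε)`-separated set. -/
def IsNSep (f : X → X) (n : ℕ) (ε : ℝ) (A : Set X) : Prop :=
  ∀ x ∈ A, ∀ y ∈ A, x ≠ y → ∃ j < n, ε < dist (f^[j] x) (f^[j] y)

/-- `A` is a `(δ,n,ε)`-separated set. -/
def IsDeltaSep (f : X → X) (δ : ℝ) (n : ℕ) (ε : ℝ) (A : Set X) : Prop :=
  ∀ x ∈ A, ∀ y ∈ A, x ≠ y → δ * n ≤ (sepCount f ε n x y : ℝ)

end Metric

section Entropy

variable [MeasurableSpace X]

/-- A finite measurable partition of `X`. -/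
def IsFinPartition (s : Finset (Set X)) : Prop :=
  (∀ A ∈ s, MeasurableSet A) ∧ ⋃₀ (s : Set (Set X)) = Set.univ ∧
    (s : Set (Set X)).Pairwise Disjoint

/-- The entropy `H(μ, ⋁_{i<n} f^{-i} ξ)` of the `n`-th dynamical refinement of the
partition `s` (with the convention `0 · log 0 = 0`). -/
noncomputable def dynH (f : X → X) (μ : Measure X) (s : Finset (Set X)) (n : ℕ) : ℝ :=
  -∑ w : Fin n → {A // A ∈ s},
      (μ (⋂ i : Fin n, f^[(i : ℕ)] ⁻¹' ((w i : Set X)))).toReal *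
        Real.log (μ (⋂ i : Fin n, f^[(i : ℕ)] ⁻¹' ((w i : Set X)))).toReal

/-- The Kolmogorov–Sinai entropy `h_μ(f)`, as an extended real:
`sup_ξ lim_n H(μ, ξ^n)/n`. -/
noncomputable def ksEntropy (f : X → X) (μ : Measure X) : EReal :=
  ⨆ (s : Finset (Set X)) (_ : IsFinPartition s),
    Filter.atTop.liminf (fun n : ℕ => ((dynH f μ s n / n : ℝ) : EReal))

end Entropy

section Pressure

variable [MetricSpace X] [MeasurableSpace X]

/-- Brin–Katok local entropy `h_μ(x) = lim_{ε→0} liminf_n -(1/n) log μ(B_n(x,ε))`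
(the limit in `ε` being a supremum by monotonicity). -/
noncomputable def localEntropy (f : X → X) (μ : Measure X) (x : X) : EReal :=
  ⨆ (ε : ℝ) (_ : 0 < ε),
    Filter.atTop.liminf (fun n : ℕ =>
      (((n : ℝ)⁻¹ : ℝ) : EReal) * (-(μ (bowenBall f x n ε)).log))

/-- The point-wise measure theoretic pressure
`P_μ(f,φ,x) = lim_{ε→0} liminf_n (1/n)[-log μ(B_n(x,ε)) + S_nφ(x)]`. -/
noncomputable def ptPressure (f : X → X) (φ : X → ℝ) (μ : Measure X) (x : X) : EReal :=
  ⨆ (ε : ℝ) (_ : 0 < ε),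
    Filter.atTop.liminf (fun n : ℕ =>
      (((n : ℝ)⁻¹ : ℝ) : EReal) * (-(μ (bowenBall f x n ε)).log + ((birk f φ n x : ℝ) : EReal)))

/-- `M(Z,φ,α,N,ε)`: infimum of `∑_i exp(-α n_i + S_{n_i}φ(x_i))` over countable covers
of `Z` by Bowen balls `B_{n_i}(x_i,ε)` with `n_i ≥ N`. -/
noncomputable def Mcov (f : X → X) (φ : X → ℝ) (Z : Set X) (α : ℝ) (N : ℕ) (ε : ℝ) : ℝ≥0∞ :=
  ⨅ (c : ℕ → X × ℕ)
    (_ : (∀ i, N ≤ (c i).2) ∧ Z ⊆ ⋃ i, bowenBall f (c i).1 (c i).2 ε),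
      ∑' i, ENNReal.ofReal (Real.exp (-α * ((c i).2 : ℝ) + birk f φ (c i).2 (c i).1))

/-- `m(Z,φ,α,ε) = lim_{N→∞} M(Z,φ,α,N,ε)` (a supremum, by monotonicity in `N`). -/
noncomputable def mZ (f : X → X) (φ : X → ℝ) (Z : Set X) (α : ℝ) (ε : ℝ) : ℝ≥0∞ :=
  ⨆ N : ℕ, Mcov f φ Z α N ε

/-- `P_Z(f,φ,ε) = inf {α : m(Z,φ,α,ε) = 0}`, the jump-up point of `α ↦ m(Z,φ,α,ε)`. -/
noncomputable def PZeps (f : X → X) (φ : X → ℝ) (Z : Set X) (ε : ℝ) : EReal :=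
  ⨅ (α : ℝ) (_ : mZ f φ Z α ε = 0), ((α : ℝ) : EReal)

/-- The topological pressure `P_Z(f,φ) = lim_{ε→0} P_Z(f,φ,ε)` on an arbitrary set `Z`
(the limit in `ε` being a supremum by monotonicity). -/
noncomputable def PZ (f : X → X) (φ : X → ℝ) (Z : Set X) : EReal :=
  ⨆ (ε : ℝ) (_ : 0 < ε), PZeps f φ Z ε

/-- The measure theoretic pressure
`P_μ(f,φ) = lim_{ε→0} inf {P_Z(f,φ,ε) : Z Borel, μ(Z) = 1}`. -/
noncomputable def Pmu (f : X → X) (φ : X → ℝ) (μ : Measure X) : EReal :=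
  ⨆ (ε : ℝ) (_ : 0 < ε),
    ⨅ (Z : Set X) (_ : MeasurableSet Z ∧ μ Z = 1), PZeps f φ Z ε

end Pressure

end Paper

open Paper

/-!
For the first equality, `Pmu` is the essential supremum of the pointwise pressure. The lower bound
is a mass distribution argument: where the pressure at scale `ε` exceeds `α`, the balls
`B_n(x, ε)` have `μ`-mass at most `exp(-α n + S_n φ(x))`, so covers by smaller balls have
Carathéodory sums bounded below, up to the oscillation of `φ`. The upper bound selects from the
Bowen balls with mass at least the corresponding exponential a disjoint subfamily whose
enlargements still cover, as in Vitali's theorem. Birkhoff's theorem, by way of the maximal ergodic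
inequality, then splits the pointwise pressure into local entropy plus the time average of `φ`.

In the ergodic case, the local entropy at a fixed scale does not increase along orbits, hence is
almost surely constant, and it remains to compare this constant with the Kolmogorov–Sinai entropy.
A partition into sets of diameter less than `ε` has its itinerary cells inside Bowen balls, which
after integration bounds the local entropy from above. Conversely, Katok's argument bounds `Pmu`
from below: for typical points, the itineraries met by a small Bowen ball are within a small Hamming
distance of each other, hence few, and their cells have mass at most `exp(-n t)` for every `t` below
the entropy of the partition. That mass estimate is the lower half of the Shannon–McMillan–Breiman
theorem, and for it conditional information may be truncated at a height `K`: the chain rule still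
gives a lower bound on the information of long itineraries, bounded convergence replaces the maximal
inequality, and the truncation costs at most `card · exp(-K)` in mean.
-/

namespace Paper

open scoped Topology

section BirkhoffErgodic

variable {X : Type*} {f : X → X}

theorem partialSups_birkhoffSum_succ (f : X → X) (g : X → ℝ) (n : ℕ) (x : X) :
    partialSups (birkhoffSum f g · x) (n + 1) =
      0 ⊔ (g x + partialSups (birkhoffSum f g · (f x)) n) := by
  rw [← Order.succ_eq_add_one, partialSups_succ', bot_eq_zero, birkhoffSum_zero,
    ← partialSups_const_add]
  simp only [Function.comp_def, Order.succ_eq_add_one, birkhoffSum_succ']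

theorem bddAbove_range_birkhoffSum_apply_iff (g : X → ℝ) (x : X) :
    BddAbove (range (birkhoffSum f g · (f x))) ↔ BddAbove (range (birkhoffSum f g · x)) := by
  constructor
  · rintro ⟨C, hC⟩
    refine ⟨max 0 (g x + C), forall_mem_range.2 fun n => ?_⟩
    cases n with
    | zero => simp
    | succ n =>
      have : birkhoffSum f g n (f x) ≤ C := hC ⟨n, rfl⟩
      simp only [birkhoffSum_succ']
      exact le_max_of_le_right (by gcongr)
  · rintro ⟨C, hC⟩
    refine ⟨C - g x, forall_mem_range.2 fun n => ?_⟩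
    have : birkhoffSum f g (n + 1) x ≤ C := hC ⟨n + 1, rfl⟩
    rw [birkhoffSum_succ'] at this
    linarith

variable [MeasurableSpace X] {μ : Measure X} {g : X → ℝ}

theorem measurable_birkhoffSum (hf : Measurable f) (hg : Measurable g) (n : ℕ) :
    Measurable (birkhoffSum f g n) :=
  Finset.measurable_fun_sum _ fun i _ => hg.comp (hf.iterate i)

theorem integrable_birkhoffSum (hf : MeasurePreserving f μ μ) (hg : Integrable g μ) (n : ℕ) :
    Integrable (birkhoffSum f g n) μ :=
  integrable_finsetSum _ fun i _ => (hf.iterate i).integrable_comp_of_integrable hg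

theorem integrable_partialSups_birkhoffSum (hf : MeasurePreserving f μ μ) (hg : Integrable g μ)
    (n : ℕ) : Integrable (fun x => partialSups (birkhoffSum f g · x) n) μ := by
  induction n with
  | zero => simp
  | succ n ih =>
    simp only [partialSups_add_one]
    exact ih.sup (integrable_birkhoffSum hf hg _)

theorem integral_comp_of_measurePreserving (hf : MeasurePreserving f μ μ)
    (hg : AEStronglyMeasurable g μ) : ∫ x, g (f x) ∂μ = ∫ x, g x ∂μ := by
  rw [← integral_map hf.aemeasurable (hf.map_eq.symm ▸ hg), hf.map_eq]

theorem setIntegral_nonneg_of_exists_le_birkhoffSum_pos (hf : MeasurePreserving f μ μ)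
    (hgm : Measurable g) (hg : Integrable g μ) (n : ℕ) :
    0 ≤ ∫ x in {x | ∃ k ≤ n, 0 < birkhoffSum f g k x}, g x ∂μ := by
  set E : Set X := {x | ∃ k ≤ n, 0 < birkhoffSum f g k x}
  have hE : MeasurableSet E := by
    have (k : ℕ) := measurable_birkhoffSum hf.measurable hgm k
    measurability
  set F : X → ℝ := fun x => partialSups (birkhoffSum f g · x) n
  have hF : Integrable F μ := integrable_partialSups_birkhoffSum hf hg n
  have hFf : Integrable (fun x => F (f x)) μ := hf.integrable_comp_of_integrable hF
  have hF₀ (x : X) : 0 ≤ F x := le_partialSups_of_le (birkhoffSum f g · x) n.zero_le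
  have hpos (x : X) : 0 < F x ↔ x ∈ E :=
    not_le.symm.trans (partialSups_le_iff.not.trans (by simp [E]))
  have hle (x : X) : F x - F (f x) ≤ E.indicator g x := by
    by_cases hx : 0 < F x
    · have h : F x ≤ 0 ⊔ (g x + F (f x)) :=
        ((partialSups (birkhoffSum f g · x)).mono n.le_succ).trans_eq
          (partialSups_birkhoffSum_succ f g n x)
      rw [indicator_of_mem ((hpos x).1 hx), sub_le_iff_le_add]
      exact (le_sup_iff.1 h).resolve_left hx.not_ge
    · rw [indicator_of_notMem (mt (hpos x).2 hx)]
      linarith [hF₀ (f x)]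
  calc 0 = ∫ x, F x - F (f x) ∂μ := by
        rw [integral_sub hF hFf, integral_comp_of_measurePreserving hf hF.1, sub_self]
    _ ≤ ∫ x, E.indicator g x ∂μ := integral_mono (hF.sub hFf) (hg.indicator hE) hle
    _ = ∫ x in E, g x ∂μ := integral_indicator hE

theorem setIntegral_nonneg_of_exists_birkhoffSum_pos (hf : MeasurePreserving f μ μ)
    (hgm : Measurable g) (hg : Integrable g μ) :
    0 ≤ ∫ x in {x | ∃ n, 0 < birkhoffSum f g n x}, g x ∂μ := by
  have hunion : {x | ∃ n, 0 < birkhoffSum f g n x} =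
      ⋃ n, {x | ∃ k ≤ n, 0 < birkhoffSum f g k x} := by
    ext x
    simp only [mem_iUnion, mem_ofPred_eq]
    exact ⟨fun ⟨n, hn⟩ => ⟨n, n, le_rfl, hn⟩, fun ⟨_, k, _, hk⟩ => ⟨k, hk⟩⟩
  have hmeas (n : ℕ) : MeasurableSet {x | ∃ k ≤ n, 0 < birkhoffSum f g k x} := by
    have (k : ℕ) := measurable_birkhoffSum hf.measurable hgm k
    measurability
  rw [hunion]
  refine ge_of_tendsto' (tendsto_setIntegral_of_monotone hmeas ?_ hg.integrableOn)
    (setIntegral_nonneg_of_exists_le_birkhoffSum_pos hf hgm hg)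
  exact fun m n hmn x ⟨k, hk, hx⟩ => ⟨k, hk.trans hmn, hx⟩

theorem ae_bddAbove_birkhoffSum_of_condExp_neg [IsFiniteMeasure μ] (hf : MeasurePreserving f μ μ)
    (hgm : Measurable g) (hg : Integrable g μ)
    (hneg : ∀ᵐ x ∂μ, (μ[g | MeasurableSpace.invariants f]) x < 0) :
    ∀ᵐ x ∂μ, BddAbove (range (birkhoffSum f g · x)) := by
  set A : Set X := {x | ¬BddAbove (range (birkhoffSum f g · x))}
  have hA : MeasurableSet A :=
    (measurableSet_bddAbove_range fun n => measurable_birkhoffSum hf.measurable hgm n).compl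
  have hfA : f ⁻¹' A = A := by
    ext x
    exact (bddAbove_range_birkhoffSum_apply_iff g x).not
  have hAinv : MeasurableSet[MeasurableSpace.invariants f] A := ⟨hA, hfA⟩
  have hrestrict : MeasurePreserving f (μ.restrict A) (μ.restrict A) := by
    simpa only [hfA] using hf.restrict_preimage hA
  have hsub : A ⊆ {x | ∃ n, 0 < birkhoffSum f g n x} := fun x hx => by
    by_contra! hcon
    exact hx ⟨0, forall_mem_range.2 (by simpa using hcon)⟩
  have hnonneg : 0 ≤ ∫ x in A, (μ[g | MeasurableSpace.invariants f]) x ∂μ := by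
    rw [setIntegral_condExp (MeasurableSpace.invariants_le f) hg hAinv]
    convert setIntegral_nonneg_of_exists_birkhoffSum_pos hrestrict hgm hg.restrict using 1
    rw [Measure.restrict_restrict' hA, inter_eq_right.2 hsub]
  have hneg' : 0 ≤ᵐ[μ.restrict A] -μ[g | MeasurableSpace.invariants f] :=
    ae_restrict_of_ae (hneg.mono fun x hx => (neg_pos.2 hx).le)
  have hzero := (setIntegral_eq_zero_iff_of_nonneg_ae hneg' integrable_condExp.neg.integrableOn).1
    (le_antisymm (by simpa [integral_neg] using hnonneg)
      (setIntegral_nonneg_of_ae_restrict hneg'))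
  filter_upwards [hneg, (ae_restrict_iff' hA).1 hzero] with x hx hxA
  by_contra hcon
  exact hx.ne (neg_eq_zero.1 (hxA hcon))

theorem eventually_birkhoffAverage_lt_condExp_add [IsFiniteMeasure μ]
    (hf : MeasurePreserving f μ μ) (hgm : Measurable g) (hg : Integrable g μ) {δ : ℝ}
    (hδ : 0 < δ) :
    ∀ᵐ x ∂μ, ∀ᶠ n in atTop,
      birkhoffAverage ℝ f g n x < (μ[g | MeasurableSpace.invariants f]) x + δ := by
  have hm : MeasurableSpace.invariants f ≤ _ := MeasurableSpace.invariants_le f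
  set c : X → ℝ := fun x => (μ[g | MeasurableSpace.invariants f]) x + δ / 2
  have hcm : Measurable[MeasurableSpace.invariants f] c :=
    stronglyMeasurable_condExp.measurable.add_const _
  have hci : Integrable c μ := integrable_condExp.add (integrable_const _)
  have hcf : c ∘ f = c := MeasurableSpace.comp_eq_of_measurable_invariants hcm
  have hneg : ∀ᵐ x ∂μ, (μ[g - c | MeasurableSpace.invariants f]) x < 0 := by
    filter_upwards [condExp_sub hg hci (MeasurableSpace.invariants f)] with x hx
    rw [hx, Pi.sub_apply, condExp_of_stronglyMeasurable hm hcm.stronglyMeasurable hci]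
    simp only [c]
    linarith
  filter_upwards [ae_bddAbove_birkhoffSum_of_condExp_neg hf (hgm.sub (hcm.mono hm le_rfl))
    (hg.sub hci) hneg] with x ⟨C, hC⟩
  filter_upwards [eventually_gt_atTop 0,
    (tendsto_const_div_atTop_nhds_zero_nat C).eventually_lt_const (half_pos hδ)] with n hn hCn
  have hsum : birkhoffSum f (g - c) n x ≤ C := hC ⟨n, rfl⟩
  have havg : birkhoffAverage ℝ f (g - c) n x ≤ C / n := by
    rw [birkhoffAverage, smul_eq_mul, inv_mul_eq_div]
    gcongr
  rw [birkhoffAverage_sub, Pi.sub_apply,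
    birkhoffAverage_of_comp_eq ℝ hcf (Nat.cast_ne_zero.2 hn.ne')] at havg
  simp only [Pi.sub_apply, c] at havg
  linarith

theorem tendsto_birkhoffAverage_ae_condExp [IsFiniteMeasure μ] (hf : MeasurePreserving f μ μ)
    (hg : Integrable g μ) :
    ∀ᵐ x ∂μ, Tendsto (birkhoffAverage ℝ f g · x) atTop
      (𝓝 ((μ[g | MeasurableSpace.invariants f]) x)) := by
  wlog hgm : Measurable g generalizing g
  · have hae : hg.1.mk g =ᵐ[μ] g := hg.1.ae_eq_mk.symm
    filter_upwards [this (hg.congr hae.symm) hg.1.stronglyMeasurable_mk.measurable,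
      condExp_congr_ae hae, ae_all_iff.2 fun n =>
        hf.quasiMeasurePreserving.birkhoffAverage_ae_eq_of_ae_eq ℝ hae n] with x hx hE havg
    rw [← hE]
    exact hx.congr havg
  have hupper := ae_all_iff.2 fun k : ℕ =>
    eventually_birkhoffAverage_lt_condExp_add hf hgm hg (Nat.one_div_pos_of_nat (n := k))
  have hlower := ae_all_iff.2 fun k : ℕ =>
    eventually_birkhoffAverage_lt_condExp_add hf hgm.neg hg.neg (Nat.one_div_pos_of_nat (n := k))
  filter_upwards [hupper, hlower, condExp_neg g (MeasurableSpace.invariants f)]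
    with x hxu hxl hxneg
  refine tendsto_order.2 ⟨fun a ha => ?_, fun a ha => ?_⟩
  · obtain ⟨k, hk⟩ := exists_nat_one_div_lt (sub_pos.2 ha)
    filter_upwards [hxl k] with n hn
    rw [hxneg, birkhoffAverage_neg] at hn
    simp only [Pi.neg_apply] at hn
    linarith
  · obtain ⟨k, hk⟩ := exists_nat_one_div_lt (sub_pos.2 ha)
    filter_upwards [hxu k] with n hn
    linarith

theorem tendsto_birkhoffAverage_ae_integral [IsProbabilityMeasure μ] (hf : Ergodic f μ)
    (hg : Integrable g μ) :
    ∀ᵐ x ∂μ, Tendsto (birkhoffAverage ℝ f g · x) atTop (𝓝 (∫ y, g y ∂μ)) := by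
  have hm : MeasurableSpace.invariants f ≤ _ := MeasurableSpace.invariants_le f
  have hEm : Measurable[MeasurableSpace.invariants f] (μ[g | MeasurableSpace.invariants f]) :=
    stronglyMeasurable_condExp.measurable
  obtain ⟨c, hc⟩ := hf.toPreErgodic.ae_eq_const_of_ae_eq_comp (hEm.mono hm le_rfl)
    (MeasurableSpace.comp_eq_of_measurable_invariants hEm)
  have hint : ∫ y, g y ∂μ = c := by
    rw [← integral_condExp hm, integral_congr_ae hc]
    simp
  filter_upwards [tendsto_birkhoffAverage_ae_condExp hf.toMeasurePreserving hg, hc] with x hx hxc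
  simpa only [hint, hxc, Function.const_apply] using hx

end BirkhoffErgodic

section LocalPressure

theorem frequently_exists_iff {α ι : Type*} [MeasurableSpace α] [Countable ι] {μ : Measure α}
    {p : α → ι → Prop} : (∃ᵐ x ∂μ, ∃ i, p x i) ↔ ∃ i, ∃ᵐ x ∂μ, p x i := by
  simp only [Filter.Frequently, not_exists, ae_all_iff, not_forall]

variable {X : Type*}

theorem birk_eq_birkhoffSum (f : X → X) (φ : X → ℝ) : birk f φ = birkhoffSum f φ := rfl

@[simp]
theorem birk_zero (f : X → X) (n : ℕ) (x : X) : birk f 0 n x = 0 := by simp [birk]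

theorem birk_div_eq_birkhoffAverage (f : X → X) (φ : X → ℝ) (n : ℕ) (x : X) :
    birk f φ n x / n = birkhoffAverage ℝ f φ n x := by
  rw [birkhoffAverage, smul_eq_mul, birk_eq_birkhoffSum, inv_mul_eq_div]

/-- The weight `exp(-α n + S_n φ(x))` of the Bowen ball `B_n(x, ·)` in the Carathéodory sums
defining `Mcov`. -/
noncomputable def bowenWeight (f : X → X) (φ : X → ℝ) (α : ℝ) (x : X) (n : ℕ) : ℝ≥0∞ :=
  ENNReal.ofReal (Real.exp (-α * n + birk f φ n x))

theorem bowenWeight_anti (f : X → X) (φ : X → ℝ) {α β : ℝ} (h : α ≤ β) (x : X) (n : ℕ) :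
    bowenWeight f φ β x n ≤ bowenWeight f φ α x n := by
  unfold bowenWeight
  gcongr

theorem bowenWeight_add (f : X → X) (φ : X → ℝ) (α δ : ℝ) (x : X) (n : ℕ) :
    bowenWeight f φ (α + δ) x n =
      ENNReal.ofReal (Real.exp (-δ * n)) * bowenWeight f φ α x n := by
  rw [bowenWeight, bowenWeight, ← ENNReal.ofReal_mul (Real.exp_pos _).le, ← Real.exp_add]
  ring_nf

theorem lt_inv_mul_neg_log_add_iff {n : ℕ} (hn : n ≠ 0) {m : ℝ≥0∞} (hm : m ≠ ⊤) (b s : ℝ) :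
    (s : EReal) < ((n : ℝ)⁻¹ : ℝ) * (-m.log + (b : EReal)) ↔
      m < ENNReal.ofReal (Real.exp (-s * n + b)) := by
  have hn₀ : (0 : ℝ) < n := mod_cast hn.bot_lt
  rcases eq_or_ne m 0 with rfl | h₀
  · rw [ENNReal.log_zero, EReal.neg_bot, EReal.top_add_coe,
      EReal.coe_mul_top_of_pos (inv_pos.2 hn₀)]
    simp [EReal.coe_lt_top, Real.exp_pos]
  · rw [ENNReal.log_pos_real h₀ hm, ← EReal.coe_neg, ← EReal.coe_add, ← EReal.coe_mul,
      EReal.coe_lt_coe_iff, ENNReal.lt_ofReal_iff_toReal_lt hm,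
      ← Real.log_lt_iff_lt_exp (ENNReal.toReal_pos h₀ hm), inv_mul_eq_div, lt_div_iff₀ hn₀]
    constructor <;> intro h <;> linarith

variable [MetricSpace X] {f : X → X}

theorem mem_bowenBall_self (f : X → X) (x : X) (n : ℕ) {ε : ℝ} (hε : 0 < ε) :
    x ∈ bowenBall f x n ε := fun i _ => by rwa [dist_self]

theorem mem_bowenBall_comm {x y : X} {n : ℕ} {ε : ℝ} :
    y ∈ bowenBall f x n ε ↔ x ∈ bowenBall f y n ε := by
  simp only [bowenBall, mem_ofPred_eq, dist_comm]

theorem bowenBall_mono (f : X → X) (x : X) (n : ℕ) {ε ε' : ℝ} (h : ε ≤ ε') :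
    bowenBall f x n ε ⊆ bowenBall f x n ε' := fun _ hy i hi => (hy i hi).trans_le h

theorem bowenBall_anti (f : X → X) (x : X) (ε : ℝ) {m n : ℕ} (h : m ≤ n) :
    bowenBall f x n ε ⊆ bowenBall f x m ε := fun _ hy i hi => hy i (hi.trans_le h)

theorem mem_bowenBall_trans {x y z : X} {n : ℕ} {ε ε' : ℝ} (hy : y ∈ bowenBall f x n ε)
    (hz : z ∈ bowenBall f y n ε') : z ∈ bowenBall f x n (ε + ε') := fun i hi =>
  (dist_triangle _ _ _).trans_lt (add_lt_add (hy i hi) (hz i hi))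

theorem bowenBall_succ (f : X → X) (x : X) (n : ℕ) (ε : ℝ) :
    bowenBall f x (n + 1) ε = Metric.ball x ε ∩ f ⁻¹' bowenBall f (f x) n ε := by
  ext y
  simp only [bowenBall, mem_ofPred_eq, mem_inter_iff, mem_preimage, Metric.mem_ball']
  exact Nat.forall_lt_succ_left'

theorem isOpen_bowenBall (hf : Continuous f) (x : X) (n : ℕ) (ε : ℝ) :
    IsOpen (bowenBall f x n ε) := by
  have : bowenBall f x n ε = ⋂ i ∈ Finset.range n, {y | dist (f^[i] x) (f^[i] y) < ε} := by
    ext y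
    simp [bowenBall]
  rw [this]
  exact isOpen_biInter_finset fun i _ =>
    isOpen_lt (continuous_const.dist (hf.iterate i)) continuous_const

variable [MeasurableSpace X] {φ : X → ℝ} {μ : Measure X} {ε : ℝ} {x : X}

/-- The quantity `liminf (1/n) [-log μ(B_n(x,ε)) + S_n φ(x)]` at a fixed scale `ε`, whose supremum
over `ε > 0` is the pointwise pressure. -/
noncomputable def localPressure (f : X → X) (φ : X → ℝ) (μ : Measure X) (ε : ℝ) (x : X) : EReal :=
  atTop.liminf fun n : ℕ =>
    (((n : ℝ)⁻¹ : ℝ) : EReal) * (-(μ (bowenBall f x n ε)).log + ((birk f φ n x : ℝ) : EReal))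

theorem ptPressure_eq_iSup_localPressure (f : X → X) (φ : X → ℝ) (μ : Measure X) (x : X) :
    ptPressure f φ μ x = ⨆ (ε : ℝ) (_ : 0 < ε), localPressure f φ μ ε x := rfl

theorem localPressure_le_ptPressure (f : X → X) (φ : X → ℝ) (μ : Measure X) (hε : 0 < ε) (x : X) :
    localPressure f φ μ ε x ≤ ptPressure f φ μ x :=
  le_iSup₂ (f := fun (ε : ℝ) (_ : 0 < ε) => localPressure f φ μ ε x) ε hε

theorem localPressure_anti (f : X → X) (φ : X → ℝ) (μ : Measure X) (x : X) :
    Antitone fun ε => localPressure f φ μ ε x := fun ε ε' h => by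
  refine liminf_le_liminf (Eventually.of_forall fun n => ?_)
  have hlog : -(μ (bowenBall f x n ε')).log ≤ -(μ (bowenBall f x n ε)).log :=
    EReal.neg_le_neg_iff.2 (ENNReal.log_le_log (measure_mono (bowenBall_mono f x n h)))
  have : (0 : EReal) ≤ (((n : ℝ)⁻¹ : ℝ) : EReal) := mod_cast inv_nonneg.2 n.cast_nonneg
  gcongr

theorem exists_lt_localPressure_of_lt_ptPressure {s : EReal} (h : s < ptPressure f φ μ x) :
    ∃ k : ℕ, s < localPressure f φ μ (1 / (k + 1)) x := by
  simp only [ptPressure_eq_iSup_localPressure, lt_iSup_iff] at h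
  obtain ⟨ε, hε, h⟩ := h
  obtain ⟨k, hk⟩ := exists_nat_one_div_lt hε
  exact ⟨k, h.trans_le (localPressure_anti f φ μ x hk.le)⟩

theorem eventually_measure_bowenBall_lt [IsFiniteMeasure μ] {s : ℝ}
    (h : (s : EReal) < localPressure f φ μ ε x) :
    ∀ᶠ n in atTop, μ (bowenBall f x n ε) < bowenWeight f φ s x n := by
  filter_upwards [eventually_lt_of_lt_liminf h, eventually_ne_atTop 0] with n hn hn₀
  exact (lt_inv_mul_neg_log_add_iff hn₀ (measure_ne_top _ _) _ _).1 hn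

theorem frequently_bowenWeight_le [IsFiniteMeasure μ] {s : ℝ}
    (h : localPressure f φ μ ε x < s) :
    ∃ᶠ n in atTop, bowenWeight f φ s x n ≤ μ (bowenBall f x n ε) := by
  refine ((frequently_lt_of_liminf_lt (by isBoundedDefault) h).and_eventually
    (eventually_ne_atTop 0)).mono fun n ⟨hn, hn₀⟩ => not_lt.1 fun hlt => hn.not_gt ?_
  exact (lt_inv_mul_neg_log_add_iff hn₀ (measure_ne_top _ _) _ _).2 hlt

theorem localEntropy_eq_ptPressure_zero (f : X → X) (μ : Measure X) :
    localEntropy f μ = ptPressure f 0 μ := by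
  ext x
  simp [localEntropy, ptPressure]

theorem localPressure_eq_add_of_tendsto {c : ℝ} (ε : ℝ)
    (h : Tendsto (fun n : ℕ => birk f φ n x / n) atTop (𝓝 c)) :
    localPressure f φ μ ε x = localPressure f 0 μ ε x + c := by
  set u : ℕ → EReal := fun n => ((birk f φ n x / n : ℝ) : EReal)
  set v : ℕ → EReal := fun n => ((n : ℝ)⁻¹ : ℝ) * -(μ (bowenBall f x n ε)).log
  have hu : Tendsto u atTop (𝓝 (c : EReal)) := (continuous_coe_real_ereal.tendsto c).comp h
  have hφ : localPressure f φ μ ε x = liminf (u + v) atTop := by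
    refine liminf_congr (Eventually.of_forall fun n => ?_)
    rw [EReal.left_distrib_of_nonneg_of_ne_top (mod_cast inv_nonneg.2 n.cast_nonneg)
      (EReal.coe_ne_top _), add_comm, ← EReal.coe_mul, inv_mul_eq_div, Pi.add_apply]
  have h₀ : localPressure f 0 μ ε x = liminf v atTop := by simp [localPressure, v]
  rw [hφ, h₀, add_comm _ (c : EReal)]
  apply le_antisymm
  · simpa only [hu.limsup_eq] using EReal.liminf_add_le (u := u) (v := v) (f := atTop)
      (Or.inl (hu.limsup_eq ▸ EReal.coe_ne_bot c)) (Or.inl (hu.limsup_eq ▸ EReal.coe_ne_top c))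
  · simpa only [hu.liminf_eq] using EReal.le_liminf_add (u := u) (v := v) (f := atTop)

theorem ptPressure_eq_localEntropy_add_of_tendsto {c : ℝ}
    (h : Tendsto (fun n : ℕ => birk f φ n x / n) atTop (𝓝 c)) :
    ptPressure f φ μ x = localEntropy f μ x + c := by
  rw [localEntropy_eq_ptPressure_zero]
  apply le_antisymm
  · refine iSup₂_le fun ε hε => (localPressure_eq_add_of_tendsto ε h).trans_le ?_
    exact add_le_add_left (localPressure_le_ptPressure f 0 μ hε x) _
  · rw [← EReal.le_sub_iff_add_le (by simp) (by simp)]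
    refine iSup₂_le fun ε hε => ?_
    rw [EReal.le_sub_iff_add_le (by simp) (by simp)]
    exact (localPressure_eq_add_of_tendsto ε h).symm.trans_le
      (localPressure_le_ptPressure f φ μ hε x)

theorem measurable_localPressure [SecondCountableTopology X] [BorelSpace X] [SFinite μ]
    (hf : Continuous f) (hφ : Measurable φ) (ε : ℝ) :
    Measurable (localPressure f φ μ ε) := by
  refine Measurable.liminf fun n => ?_
  have hopen : IsOpen {p : X × X | p.2 ∈ bowenBall f p.1 n ε} := by
    have : {p : X × X | p.2 ∈ bowenBall f p.1 n ε} =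
        ⋂ i ∈ Finset.range n, {p : X × X | dist (f^[i] p.1) (f^[i] p.2) < ε} := by
      ext p
      simp [bowenBall]
    rw [this]
    exact isOpen_biInter_finset fun i _ => isOpen_lt
      (((hf.iterate i).comp continuous_fst).dist ((hf.iterate i).comp continuous_snd))
      continuous_const
  have hball : Measurable fun x => μ (bowenBall f x n ε) :=
    measurable_measure_prodMk_left (ν := μ) hopen.measurableSet
  have hbirk : Measurable (birk f φ n) := measurable_birkhoffSum hf.measurable hφ n
  exact (measurable_const.mul ((ENNReal.measurable_log.comp hball).neg.add hbirk.coe_real_ereal))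

theorem localPressure_comp_le [OpensMeasurableSpace X] [IsFiniteMeasure μ] (hf : Continuous f)
    (hμ : MeasurePreserving f μ μ) (φ : X → ℝ) (ε : ℝ) (x : X) :
    localPressure f φ μ ε (f x) ≤ localPressure f φ μ ε x := by
  refine le_of_forall_lt fun a ha => ?_
  obtain ⟨q, haq, hq⟩ := EReal.lt_iff_exists_real_btwn.1 ha
  obtain ⟨s, has, hsq⟩ := EReal.lt_iff_exists_real_btwn.1 haq
  refine has.trans_le (le_liminf_of_le (by isBoundedDefault) ?_)
  have hlim : Tendsto (fun n : ℕ => (q - s) * (n : ℝ)) atTop atTop :=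
    tendsto_natCast_atTop_atTop.const_mul_atTop (sub_pos.2 (mod_cast hsq))
  rw [← map_add_atTop_eq_nat 1, eventually_map]
  filter_upwards [eventually_measure_bowenBall_lt hq,
    hlim.eventually_ge_atTop (s - φ x)] with n hn hsn
  refine ((lt_inv_mul_neg_log_add_iff n.succ_ne_zero (measure_ne_top _ _) _ _).2 ?_).le
  calc μ (bowenBall f x (n + 1) ε)
      ≤ μ (f ⁻¹' bowenBall f (f x) n ε) := by
        rw [bowenBall_succ]
        exact measure_mono inter_subset_right
    _ = μ (bowenBall f (f x) n ε) :=
        hμ.measure_preimage (isOpen_bowenBall hf _ _ _).measurableSet.nullMeasurableSet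
    _ < bowenWeight f φ q (f x) n := hn
    _ ≤ bowenWeight f φ s x (n + 1) := by
        unfold bowenWeight
        rw [birk_eq_birkhoffSum, birkhoffSum_succ']
        refine ENNReal.ofReal_le_ofReal (Real.exp_le_exp.2 ?_)
        push_cast
        linarith

theorem ae_lt_localPressure_of_frequently [SecondCountableTopology X] [BorelSpace X]
    [IsFiniteMeasure μ] (hf : Continuous f) (hμ : Ergodic f μ) (hφ : Measurable φ) {t : EReal}
    (h : ∃ᵐ x ∂μ, t < localPressure f φ μ ε x) : ∀ᵐ x ∂μ, t < localPressure f φ μ ε x := by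
  have hmeas : MeasurableSet {x | t < localPressure f φ μ ε x} :=
    measurableSet_lt measurable_const (measurable_localPressure hf hφ ε)
  rcases hμ.ae_empty_or_univ_of_preimage_ae_le hmeas.nullMeasurableSet (Eventually.of_forall
    fun x hx => hx.trans_le (localPressure_comp_le hf hμ.toMeasurePreserving φ ε x)) with h₀ | h₁
  · exact absurd (eventuallyEq_empty.1 h₀) h
  · exact eventuallyEq_univ.1 h₁

theorem exists_ae_lt_localPressure [SecondCountableTopology X] [BorelSpace X]
    [IsFiniteMeasure μ] (hf : Continuous f) (hμ : Ergodic f μ) (hφ : Measurable φ) {t : EReal}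
    (h : t < essSup (ptPressure f φ μ) μ) :
    ∃ ε > 0, ∀ᵐ x ∂μ, t < localPressure f φ μ ε x := by
  have hfreq : ∃ᵐ x ∂μ, ∃ k : ℕ, t < localPressure f φ μ (1 / (k + 1)) x :=
    (frequently_lt_of_lt_limsup (by isBoundedDefault) h).mono fun _ =>
      exists_lt_localPressure_of_lt_ptPressure
  obtain ⟨k, hk⟩ := frequently_exists_iff.1 hfreq
  exact ⟨1 / (k + 1), by positivity, ae_lt_localPressure_of_frequently hf hμ hφ hk⟩

end LocalPressure

section LowerBound

variable {X : Type*} [MetricSpace X] {f : X → X} {φ : X → ℝ} {ε α γ : ℝ}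

theorem birk_le_add_of_mem_bowenBall (hγ : ∀ x y, dist x y < ε → |φ x - φ y| ≤ γ) {x y : X} {n : ℕ}
    (h : y ∈ bowenBall f x n ε) : birk f φ n y ≤ birk f φ n x + n * γ := by
  calc birk f φ n y ≤ ∑ i ∈ Finset.range n, (φ (f^[i] x) + γ) := by
        refine Finset.sum_le_sum fun i hi => ?_
        linarith [neg_le_of_abs_le (hγ _ _ (h i (Finset.mem_range.1 hi)))]
    _ = birk f φ n x + n * γ := by simp [Finset.sum_add_distrib, birk]

theorem Mcov_anti (f : X → X) (φ : X → ℝ) (Z : Set X) (N : ℕ) (ε : ℝ) :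
    Antitone fun α => Mcov f φ Z α N ε := fun _ _ h =>
  iInf₂_mono fun c _ => ENNReal.tsum_le_tsum fun i => bowenWeight_anti f φ h (c i).1 (c i).2

variable [MeasurableSpace X] {μ : Measure X} {E Z : Set X} {N : ℕ}

theorem measure_le_Mcov (hZ : μ Zᶜ = 0)
    (h : ∀ x n, N ≤ n → μ (bowenBall f x n ε ∩ E) ≤ bowenWeight f φ α x n) :
    μ E ≤ Mcov f φ Z α N ε := by
  refine le_iInf₂ fun c ⟨hcN, hcZ⟩ => ?_
  have hsub : E ∩ Z ⊆ ⋃ i, bowenBall f (c i).1 (c i).2 ε ∩ E := fun x ⟨hxE, hxZ⟩ => by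
    obtain ⟨i, hi⟩ := mem_iUnion.1 (hcZ hxZ)
    exact mem_iUnion.2 ⟨i, hi, hxE⟩
  calc μ E ≤ μ (E ∩ Z) := (measure_inter_conull hZ).ge
    _ ≤ ∑' i, μ (bowenBall f (c i).1 (c i).2 ε ∩ E) :=
        (measure_mono hsub).trans (measure_iUnion_le _)
    _ ≤ _ := ENNReal.tsum_le_tsum fun i => h _ _ (hcN i)

theorem le_Pmu_of_measure_bowenBall_inter_le [IsProbabilityMeasure μ] (hε : 0 < ε) (hE : μ E ≠ 0)
    (h : ∀ x n, N ≤ n → μ (bowenBall f x n ε ∩ E) ≤ bowenWeight f φ α x n) :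
    (α : EReal) ≤ Pmu f φ μ := by
  refine le_iSup₂_of_le ε hε (le_iInf₂ fun Z ⟨hZm, hZ⟩ => le_iInf₂ fun β hβ => ?_)
  by_contra! hlt
  have hβ₀ : Mcov f φ Z β N ε = 0 :=
    le_zero_iff.1 (hβ ▸ le_iSup (fun N => Mcov f φ Z β N ε) N)
  refine hE (le_zero_iff.1 ?_)
  calc μ E ≤ Mcov f φ Z α N ε := measure_le_Mcov ((prob_compl_eq_zero_iff hZm).2 hZ) h
    _ ≤ Mcov f φ Z β N ε := Mcov_anti f φ Z N ε (EReal.coe_lt_coe_iff.1 hlt).le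
    _ = 0 := hβ₀

theorem sub_le_Pmu_of_frequently_lt_localPressure [IsProbabilityMeasure μ] (hε : 0 < ε)
    (hγ : ∀ x y, dist x y < ε → |φ x - φ y| ≤ γ) {s : ℝ}
    (h : ∃ᵐ x ∂μ, s < localPressure f φ μ ε x) : ((s - γ : ℝ) : EReal) ≤ Pmu f φ μ := by
  obtain ⟨N, hN⟩ := frequently_exists_iff.1 (h.mono fun x hx =>
    eventually_atTop.1 (eventually_measure_bowenBall_lt hx))
  refine le_Pmu_of_measure_bowenBall_inter_le (N := N) (half_pos hε) (frequently_ae_iff.1 hN)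
    fun x n hn => ?_
  rcases eq_empty_or_nonempty (bowenBall f x n (ε / 2) ∩
    {y | ∀ n ≥ N, μ (bowenBall f y n ε) < bowenWeight f φ s y n}) with hempty | ⟨y, hyx, hy⟩
  · rw [hempty]
    simp
  have hball : bowenBall f x n (ε / 2) ⊆ bowenBall f y n ε := fun z hz =>
    add_halves ε ▸ mem_bowenBall_trans (mem_bowenBall_comm.1 hyx) hz
  have hbirk := birk_le_add_of_mem_bowenBall hγ (bowenBall_mono f x n (half_le_self hε.le) hyx)
  calc _ ≤ μ (bowenBall f y n ε) := measure_mono (inter_subset_left.trans hball)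
    _ ≤ bowenWeight f φ s y n := (hy n hn).le
    _ ≤ bowenWeight f φ (s - γ) x n :=
        ENNReal.ofReal_le_ofReal (Real.exp_le_exp.2 (by linarith))

theorem essSup_ptPressure_le_Pmu [IsProbabilityMeasure μ] (hφ : UniformContinuous φ) :
    essSup (ptPressure f φ μ) μ ≤ Pmu f φ μ := by
  refine le_of_forall_lt fun a ha => ?_
  obtain ⟨q, haq, hq⟩ := EReal.lt_iff_exists_real_btwn.1 ha
  obtain ⟨s, hqs, hs⟩ := EReal.lt_iff_exists_real_btwn.1 hq
  obtain ⟨ε, hε, hφε⟩ := Metric.uniformContinuous_iff.1 hφ (s - q)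
    (sub_pos.2 (EReal.coe_lt_coe_iff.1 hqs))
  obtain ⟨k, hk⟩ := frequently_exists_iff.1
    ((frequently_lt_of_lt_limsup (by isBoundedDefault) hs).mono fun _ =>
      exists_lt_localPressure_of_lt_ptPressure)
  have := sub_le_Pmu_of_frequently_lt_localPressure (ε := min (1 / (k + 1)) ε)
    (lt_min (by positivity) hε) (fun x y hxy => (hφε (hxy.trans_le (min_le_right _ _))).le)
    (hk.mono fun x hx => hx.trans_le (localPressure_anti f φ μ x (min_le_left _ _)))
  exact haq.trans_le (by simpa using this)

end LowerBound

section UpperBound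

variable {X : Type*} [MetricSpace X] {f : X → X} {φ : X → ℝ} {ε : ℝ}

theorem exists_pairwiseDisjoint_bowenBall_subfamily (f : X → X) (hε : 0 < ε) (t : Set (X × ℕ)) :
    ∃ u ⊆ t, u.PairwiseDisjoint (fun p => bowenBall f p.1 p.2 ε) ∧
      ∀ p ∈ t, ∃ q ∈ u, p.1 ∈ bowenBall f q.1 q.2 (ε + ε) := by
  -- Enlarging by `3 / 2 < 2` with sizes `2⁻ⁿ` selects balls of order at most that of the given one.
  obtain ⟨u, hut, hdisj, hcov⟩ := Vitali.exists_disjoint_subfamily_covering_enlargement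
    (fun p : X × ℕ => bowenBall f p.1 p.2 ε) t (fun p => (1 / 2 : ℝ) ^ p.2) (3 / 2) (by norm_num)
    (fun p _ => by positivity) 1 (fun p _ => pow_le_one₀ (by norm_num) (by norm_num))
    (fun p _ => ⟨p.1, mem_bowenBall_self f p.1 p.2 hε⟩)
  refine ⟨u, hut, hdisj, fun p hp => ?_⟩
  obtain ⟨q, hq, ⟨z, hzp, hzq⟩, hle⟩ := hcov p hp
  have horder : q.2 ≤ p.2 := by
    by_contra! hlt
    have h₁ : (1 / 2 : ℝ) ^ q.2 ≤ (1 / 2 : ℝ) ^ (p.2 + 1) :=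
      pow_le_pow_of_le_one (by norm_num) (by norm_num) hlt
    have h₂ : (0 : ℝ) < (1 / 2 : ℝ) ^ p.2 := by positivity
    rw [pow_succ] at h₁
    linarith
  exact ⟨q, hq, mem_bowenBall_trans hzq (mem_bowenBall_comm.1 (bowenBall_anti f p.1 ε horder hzp))⟩

variable {Z : Set X} {α s δ : ℝ} {N : ℕ}

theorem Mcov_mono (f : X → X) (φ : X → ℝ) (Z : Set X) (α ε : ℝ) :
    Monotone fun N => Mcov f φ Z α N ε := fun _ _ h =>
  le_iInf₂ fun c hc => iInf₂_le c ⟨fun i => h.trans (hc.1 i), hc.2⟩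

-- `Mcov` runs over infinite sequences of balls: `hsmall` pads a finite cover at no cost.
theorem Mcov_le_tsum {u : Set (X × ℕ)} (hu : u.Countable) (hN : ∀ p ∈ u, N ≤ p.2)
    (hcov : Z ⊆ ⋃ p ∈ u, bowenBall f p.1 p.2 ε)
    (hsmall : ∀ η > 0, ∃ p : X × ℕ, N ≤ p.2 ∧ bowenWeight f φ α p.1 p.2 ≤ η) :
    Mcov f φ Z α N ε ≤ ∑' p : u, bowenWeight f φ α p.1.1 p.1.2 := by
  refine ENNReal.le_of_forall_pos_le_add fun η hη _ => ?_
  obtain ⟨η', hη', hsum⟩ := ENNReal.exists_pos_sum_of_countable (ENNReal.coe_pos.2 hη).ne' ℕ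
  choose p hpN hp using fun k => hsmall (η' k) (ENNReal.coe_pos.2 (hη' k))
  have := hu.to_subtype
  obtain ⟨e⟩ : Nonempty (ℕ ≃ u ⊕ ℕ) := inferInstance
  set d : u ⊕ ℕ → X × ℕ := Sum.elim Subtype.val p
  have hd (j : u ⊕ ℕ) : N ≤ (d j).2 := by
    rcases j with q | k
    exacts [hN q q.2, hpN k]
  have hcov' : Z ⊆ ⋃ i, bowenBall f (d (e i)).1 (d (e i)).2 ε := fun x hx => by
    obtain ⟨q, hq, hxq⟩ := mem_iUnion₂.1 (hcov hx)
    exact mem_iUnion.2 ⟨e.symm (Sum.inl ⟨q, hq⟩), by simpa [d] using hxq⟩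
  calc Mcov f φ Z α N ε
      ≤ ∑' i, bowenWeight f φ α (d (e i)).1 (d (e i)).2 :=
        iInf₂_le (fun i => d (e i)) ⟨fun i => hd (e i), hcov'⟩
    _ = ∑' q : u, bowenWeight f φ α q.1.1 q.1.2 + ∑' k, bowenWeight f φ α (p k).1 (p k).2 := by
        rw [e.tsum_eq fun j => bowenWeight f φ α (d j).1 (d j).2,
          Summable.tsum_sum ENNReal.summable ENNReal.summable]
        rfl
    _ ≤ ∑' q : u, bowenWeight f φ α q.1.1 q.1.2 + η := by
        gcongr
        exact (ENNReal.tsum_le_tsum hp).trans hsum.le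

variable [MeasurableSpace X] {μ : Measure X}

theorem tendsto_ofReal_exp_neg_mul_natCast_mul (hδ : 0 < δ) {c : ℝ≥0∞} (hc : c ≠ ⊤) :
    Tendsto (fun n : ℕ => ENNReal.ofReal (Real.exp (-δ * n)) * c) atTop (𝓝 0) := by
  have hlin : Tendsto (fun n : ℕ => -δ * (n : ℝ)) atTop atBot :=
    tendsto_natCast_atTop_atTop.const_mul_atTop_of_neg (neg_neg_of_pos hδ)
  simpa using ENNReal.Tendsto.mul_const
    (ENNReal.tendsto_ofReal (Real.tendsto_exp_atBot.comp hlin)) (Or.inr hc)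

theorem exists_bowenWeight_add_le [IsFiniteMeasure μ] (hδ : 0 < δ) {x : X}
    (h : ∃ᶠ n in atTop, bowenWeight f φ s x n ≤ μ (bowenBall f x n ε)) (N : ℕ) {η : ℝ≥0∞}
    (hη : 0 < η) : ∃ p : X × ℕ, N ≤ p.2 ∧ bowenWeight f φ (s + δ) p.1 p.2 ≤ η := by
  obtain ⟨n, ⟨hn, hnη⟩, hNn⟩ := ((h.and_eventually
    ((tendsto_ofReal_exp_neg_mul_natCast_mul hδ (measure_ne_top μ univ)).eventually_le_const
      hη)).and_eventually (eventually_ge_atTop N)).exists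
  refine ⟨(x, n), hNn, le_trans ?_ hnη⟩
  rw [bowenWeight_add]
  gcongr
  exact hn.trans (measure_mono (subset_univ _))

theorem Mcov_add_le [TopologicalSpace.SeparableSpace X] [OpensMeasurableSpace X]
    [IsFiniteMeasure μ] (hf : Continuous f) (hZ : Z.Nonempty) (hε : 0 < ε) (hδ : 0 < δ)
    (h : ∀ x ∈ Z, ∃ᶠ n in atTop, bowenWeight f φ s x n ≤ μ (bowenBall f x n ε)) (N : ℕ) :
    Mcov f φ Z (s + δ) N (ε + ε) ≤ ENNReal.ofReal (Real.exp (-δ * N)) * μ univ := by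
  obtain ⟨u, hut, hdisj, hcov⟩ := exists_pairwiseDisjoint_bowenBall_subfamily f hε
    {p | p.1 ∈ Z ∧ N ≤ p.2 ∧ bowenWeight f φ s p.1 p.2 ≤ μ (bowenBall f p.1 p.2 ε)}
  have hopen (p : X × ℕ) : IsOpen (bowenBall f p.1 p.2 ε) := isOpen_bowenBall hf _ _ _
  have hu : u.Countable := hdisj.countable_of_isOpen (fun p _ => hopen p)
    fun p _ => ⟨p.1, mem_bowenBall_self f p.1 p.2 hε⟩
  have := hu.to_subtype
  have hZu : Z ⊆ ⋃ p ∈ u, bowenBall f p.1 p.2 (ε + ε) := fun x hx => by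
    obtain ⟨n, hn, hNn⟩ := ((h x hx).and_eventually (eventually_ge_atTop N)).exists
    obtain ⟨q, hq, hxq⟩ := hcov (x, n) ⟨hx, hNn, hn⟩
    exact mem_iUnion₂.2 ⟨q, hq, hxq⟩
  obtain ⟨x₀, hx₀⟩ := hZ
  calc Mcov f φ Z (s + δ) N (ε + ε)
      ≤ ∑' p : u, bowenWeight f φ (s + δ) p.1.1 p.1.2 :=
        Mcov_le_tsum hu (fun p hp => (hut hp).2.1) hZu
          fun η hη => exists_bowenWeight_add_le hδ (h x₀ hx₀) N hη
    _ ≤ ∑' p : u, ENNReal.ofReal (Real.exp (-δ * N)) * μ (bowenBall f p.1.1 p.1.2 ε) := by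
        refine ENNReal.tsum_le_tsum fun p => ?_
        rw [bowenWeight_add]
        gcongr ENNReal.ofReal (Real.exp ?_) * ?_
        · have : (N : ℝ) ≤ p.1.2 := mod_cast (hut p.2).2.1
          nlinarith
        · exact (hut p.2).2.2
    _ ≤ ENNReal.ofReal (Real.exp (-δ * N)) * μ univ := by
        rw [ENNReal.tsum_mul_left]
        gcongr
        exact (tsum_meas_le_meas_iUnion_of_disjoint μ (fun p : u => (hopen p.1).measurableSet)
          (hdisj.subtype _ _)).trans (measure_mono (subset_univ _))

theorem mZ_add_eq_zero [TopologicalSpace.SeparableSpace X] [OpensMeasurableSpace X]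
    [IsFiniteMeasure μ] (hf : Continuous f) (hZ : Z.Nonempty) (hε : 0 < ε) (hδ : 0 < δ)
    (h : ∀ x ∈ Z, ∃ᶠ n in atTop, bowenWeight f φ s x n ≤ μ (bowenBall f x n ε)) :
    mZ f φ Z (s + δ) (ε + ε) = 0 := by
  refine le_zero_iff.1 (iSup_le fun N => ge_of_tendsto
    (tendsto_ofReal_exp_neg_mul_natCast_mul hδ (measure_ne_top μ univ)) ?_)
  filter_upwards [eventually_ge_atTop N] with N' hN'
  exact (Mcov_mono f φ Z (s + δ) (ε + ε) hN').trans (Mcov_add_le hf hZ hε hδ h N')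

theorem Pmu_le_essSup_ptPressure [TopologicalSpace.SeparableSpace X] [OpensMeasurableSpace X]
    [IsProbabilityMeasure μ] (hf : Continuous f) :
    Pmu f φ μ ≤ essSup (ptPressure f φ μ) μ := by
  refine le_of_forall_gt fun a ha => ?_
  obtain ⟨q, hq, hqa⟩ := EReal.lt_iff_exists_real_btwn.1 ha
  obtain ⟨s, hs, hsq⟩ := EReal.lt_iff_exists_real_btwn.1 hq
  refine lt_of_le_of_lt (iSup₂_le fun ε hε => ?_) hqa
  have hae : ∀ᵐ x ∂μ, ∃ᶠ n in atTop, bowenWeight f φ s x n ≤ μ (bowenBall f x n (ε / 2)) := by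
    filter_upwards [ae_le_essSup (f := ptPressure f φ μ)] with x hx
    exact frequently_bowenWeight_le
      ((localPressure_le_ptPressure f φ μ (half_pos hε) x).trans_lt (hx.trans_lt hs))
  obtain ⟨Z, hZm, hZ, hZ₁⟩ : ∃ Z, MeasurableSet Z ∧
      (∀ x ∈ Z, ∃ᶠ n in atTop, bowenWeight f φ s x n ≤ μ (bowenBall f x n (ε / 2))) ∧
      μ Z = 1 := by
    refine ⟨_, (measurableSet_toMeasurable μ _).compl,
      compl_subset_comm.1 (subset_toMeasurable μ _), ?_⟩
    rwa [prob_compl_eq_one_iff (measurableSet_toMeasurable μ _), measure_toMeasurable]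
  have hZne : Z.Nonempty := nonempty_of_measure_ne_zero (hZ₁ ▸ one_ne_zero)
  have hzero := mZ_add_eq_zero hf hZne (half_pos hε)
    (sub_pos.2 (EReal.coe_lt_coe_iff.1 hsq)) hZ
  rw [add_sub_cancel, add_halves] at hzero
  exact (iInf₂_le Z ⟨hZm, hZ₁⟩).trans (iInf₂_le q hzero)

end UpperBound

theorem Pmu_eq_essSup_ptPressure {X : Type*} [MetricSpace X] [TopologicalSpace.SeparableSpace X]
    [MeasurableSpace X] [OpensMeasurableSpace X] {f : X → X} {φ : X → ℝ} {μ : Measure X}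
    [IsProbabilityMeasure μ] (hf : Continuous f) (hφ : UniformContinuous φ) :
    Pmu f φ μ = essSup (ptPressure f φ μ) μ :=
  (Pmu_le_essSup_ptPressure hf).antisymm (essSup_ptPressure_le_Pmu hφ)

section Information

open ProbabilityTheory

variable {X α β : Type*} [MeasurableSpace X] {μ : Measure X} {ξ : X → α} {N : X → β} {K : ℝ}

/-- The information function `-log μ{y | N y = N x}` of the partition of `X` into fibers of `N`. -/
noncomputable def information (μ : Measure X) (N : X → β) (x : X) : ℝ :=
  -Real.log (μ.real (N ⁻¹' {N x}))

theorem information_nonneg [IsZeroOrProbabilityMeasure μ] (N : X → β) (x : X) :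
    0 ≤ information μ N x :=
  neg_nonneg.2 (Real.log_nonpos measureReal_nonneg measureReal_le_one)

theorem ae_measureReal_fiber_pos [Countable β] [IsFiniteMeasure μ] :
    ∀ᵐ x ∂μ, 0 < μ.real (N ⁻¹' {N x}) := by
  have hnull (w : β) : ∀ᵐ x ∂μ, N x = w → μ (N ⁻¹' {w}) ≠ 0 := by
    by_cases hw : μ (N ⁻¹' {w}) = 0
    · filter_upwards [measure_eq_zero_iff_ae_notMem.1 hw] with x hx hxw
      exact absurd hxw hx
    · exact Eventually.of_forall fun _ _ => hw
  filter_upwards [ae_all_iff.2 hnull] with x hx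
  exact ENNReal.toReal_pos (hx _ rfl) (measure_ne_top _ _)

theorem measure_fiber_le_ofReal_exp_neg [IsFiniteMeasure μ] {s : ℝ} {x : X}
    (h : s ≤ information μ N x) : μ (N ⁻¹' {N x}) ≤ ENNReal.ofReal (Real.exp (-s)) := by
  rw [← ofReal_measureReal]
  refine ENNReal.ofReal_le_ofReal ?_
  rcases measureReal_nonneg.eq_or_lt with h₀ | h₀
  · exact h₀.symm.trans_le (Real.exp_nonneg _)
  · exact (Real.log_le_iff_le_exp h₀).1 (le_neg.1 h)

theorem le_information_of_measure_fiber_le {s : ℝ} {x : X} (h₀ : 0 < μ.real (N ⁻¹' {N x}))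
    (h : μ (N ⁻¹' {N x}) ≤ ENNReal.ofReal (Real.exp (-s))) : s ≤ information μ N x :=
  le_neg.2 ((Real.log_le_iff_le_exp h₀).2 (ENNReal.toReal_le_of_le_ofReal (Real.exp_nonneg _) h))

variable [MeasurableSpace β] [MeasurableSingletonClass β]

theorem information_comp {f : X → X} (hf : MeasurePreserving f μ μ) (hN : Measurable N) (x : X) :
    information μ (fun y => N (f y)) x = information μ N (f x) := by
  have := hf.measureReal_preimage (hN (measurableSet_singleton (N (f x)))).nullMeasurableSet
  simp only [information, ← this]
  rfl

theorem integrable_comp_of_finite [Finite β] [IsFiniteMeasure μ] (hN : Measurable N) (G : β → ℝ) :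
    Integrable (fun x => G (N x)) μ :=
  Integrable.of_finite.comp_measurable hN

theorem integral_comp_eq_sum [Fintype β] [IsFiniteMeasure μ] (hN : Measurable N) (G : β → ℝ) :
    ∫ x, G (N x) ∂μ = ∑ w, μ.real (N ⁻¹' {w}) * G w := by
  rw [← integral_map hN.aemeasurable (measurable_of_finite G).aestronglyMeasurable,
    integral_fintype Integrable.of_finite]
  simp only [map_measureReal_apply hN (measurableSet_singleton _), smul_eq_mul]

theorem integrable_information [Finite β] [IsFiniteMeasure μ] (hN : Measurable N) :
    Integrable (information μ N) μ :=
  integrable_comp_of_finite hN fun w => -Real.log (μ.real (N ⁻¹' {w}))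

variable [MeasurableSpace α] [StandardBorelSpace α] [Nonempty α] [IsFiniteMeasure μ]

theorem condDistrib_real_singleton (hξ : Measurable ξ) (hN : Measurable N)
    {w : β} (hw : μ.real (N ⁻¹' {w}) ≠ 0) (a : α) :
    (condDistrib ξ N μ w).real {a} =
      μ.real ((fun y => (ξ y, N y)) ⁻¹' {(a, w)}) / μ.real (N ⁻¹' {w}) := by
  have hmap := Measure.map_apply (μ := μ) hN (measurableSet_singleton w)
  have hpair : (fun y => (N y, ξ y)) ⁻¹' ({w} ×ˢ {a}) = (fun y => (ξ y, N y)) ⁻¹' {(a, w)} := by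
    ext y
    simp [and_comm]
  rw [measureReal_def, condDistrib_apply_of_ne_zero hξ w (hmap.trans_ne fun h => hw (by
    rw [measureReal_def, h, ENNReal.toReal_zero])), hmap,
    Measure.map_apply (hN.prodMk hξ) ((measurableSet_singleton w).prod (measurableSet_singleton a)),
    hpair, ENNReal.toReal_mul, ENNReal.toReal_inv, inv_mul_eq_div]
  rfl

theorem information_prodMk_sub_information (hξ : Measurable ξ) (hN : Measurable N) {x : X}
    (hx : 0 < μ.real ((fun y => (ξ y, N y)) ⁻¹' {(ξ x, N x)})) :
    information μ (fun y => (ξ y, N y)) x - information μ N x =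
      -Real.log ((condDistrib ξ N μ (N x)).real {ξ x}) := by
  have hNx : 0 < μ.real (N ⁻¹' {N x}) :=
    hx.trans_le (measureReal_mono fun y hy => congrArg Prod.snd hy)
  rw [condDistrib_real_singleton hξ hN hNx.ne', Real.log_div hx.ne' hNx.ne', information,
    information]
  ring

/-- The conditional information of `ξ` given `N`, truncated at height `K`. -/
noncomputable def truncCondInformation (μ : Measure X) [IsFiniteMeasure μ] (ξ : X → α)
    (N : X → β) (K : ℝ) (x : X) : ℝ :=
  -Real.log (max ((condDistrib ξ N μ (N x)).real {ξ x}) (Real.exp (-K)))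

theorem truncCondInformation_le_information_sub (hξ : Measurable ξ) (hN : Measurable N) {x : X}
    (hx : 0 < μ.real ((fun y => (ξ y, N y)) ⁻¹' {(ξ x, N x)})) :
    truncCondInformation μ ξ N K x ≤
      information μ (fun y => (ξ y, N y)) x - information μ N x := by
  have hNx : 0 < μ.real (N ⁻¹' {N x}) :=
    hx.trans_le (measureReal_mono fun y hy => congrArg Prod.snd hy)
  rw [information_prodMk_sub_information hξ hN hx]
  refine neg_le_neg (Real.log_le_log ?_ (le_max_left _ _))
  rw [condDistrib_real_singleton hξ hN hNx.ne']
  exact div_pos hx hNx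

theorem measurable_truncCondInformation [Finite α] [Finite β] (hξ : Measurable ξ)
    (hN : Measurable N) (K : ℝ) : Measurable (truncCondInformation μ ξ N K) :=
  (measurable_of_finite fun p : α × β =>
    -Real.log (max ((condDistrib ξ N μ p.2).real {p.1}) (Real.exp (-K)))).comp (hξ.prodMk hN)

omit [MeasurableSingletonClass β] in
theorem truncCondInformation_nonneg (hK : 0 ≤ K) (x : X) :
    0 ≤ truncCondInformation μ ξ N K x :=
  neg_nonneg.2 (Real.log_nonpos ((Real.exp_pos _).le.trans (le_max_right _ _))
    (max_le measureReal_le_one (Real.exp_le_one_iff.2 (neg_nonpos.2 hK))))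

omit [MeasurableSingletonClass β] in
theorem truncCondInformation_le (x : X) : truncCondInformation μ ξ N K x ≤ K := by
  have := Real.log_le_log (Real.exp_pos (-K))
    (le_max_right ((condDistrib ξ N μ (N x)).real {ξ x}) (Real.exp (-K)))
  rw [Real.log_exp] at this
  exact neg_le.1 this

omit [MeasurableSingletonClass β] in
theorem norm_truncCondInformation_le (hK : 0 ≤ K) (x : X) :
    ‖truncCondInformation μ ξ N K x‖ ≤ K := by
  rw [Real.norm_of_nonneg (truncCondInformation_nonneg hK x)]
  exact truncCondInformation_le x

theorem mul_neg_log_add_log_max_exp_le {r : ℝ} (hr : 0 ≤ r) (K : ℝ) :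
    r * (-Real.log r + Real.log (max r (Real.exp (-K)))) ≤ Real.exp (-K) := by
  rcases hr.eq_or_lt with rfl | hr
  · simp [Real.exp_nonneg]
  rcases le_total (Real.exp (-K)) r with h | h
  · simp [max_eq_left h, Real.exp_nonneg]
  have hexp : r * Real.exp (-Real.log r - K) = Real.exp (-K) := by
    rw [sub_eq_add_neg, Real.exp_add, Real.exp_neg, Real.exp_log hr, mul_inv_cancel_left₀ hr.ne']
  rw [max_eq_right h, Real.log_exp, ← hexp]
  gcongr
  linarith [Real.add_one_le_exp (-Real.log r - K)]

theorem integral_information_sub_truncCondInformation_le [Finite α] [Finite β]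
    (hξ : Measurable ξ) (hN : Measurable N) (K : ℝ) :
    ∫ x, (information μ (fun y => (ξ y, N y)) x - information μ N x -
      truncCondInformation μ ξ N K x) ∂μ ≤ Nat.card α * (μ.real univ * Real.exp (-K)) := by
  have := Fintype.ofFinite α
  have := Fintype.ofFinite β
  set q : α × β → ℝ := fun p => (condDistrib ξ N μ p.2).real {p.1}
  have hcongr : ∫ x, (information μ (fun y => (ξ y, N y)) x - information μ N x -
      truncCondInformation μ ξ N K x) ∂μ =
        ∫ x, (-Real.log (q (ξ x, N x)) + Real.log (max (q (ξ x, N x)) (Real.exp (-K)))) ∂μ := by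
    refine integral_congr_ae ?_
    filter_upwards [ae_measureReal_fiber_pos (N := fun y => (ξ y, N y))] with x hx
    rw [information_prodMk_sub_information hξ hN hx, truncCondInformation, sub_neg_eq_add]
  have hterm (p : α × β) : μ.real ((fun y => (ξ y, N y)) ⁻¹' {p}) *
      (-Real.log (q p) + Real.log (max (q p) (Real.exp (-K)))) ≤
        μ.real (N ⁻¹' {p.2}) * Real.exp (-K) := by
    rcases eq_or_ne (μ.real (N ⁻¹' {p.2})) 0 with h₀ | h₀
    · have : μ.real ((fun y => (ξ y, N y)) ⁻¹' {p}) = 0 := measureReal_mono_null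
        (fun y hy => congrArg Prod.snd hy) h₀
      rw [this, h₀, zero_mul, zero_mul]
    · rw [← mul_div_cancel₀ (μ.real ((fun y => (ξ y, N y)) ⁻¹' {p})) h₀, mul_assoc,
        ← condDistrib_real_singleton hξ hN h₀]
      gcongr
      exact mul_neg_log_add_log_max_exp_le measureReal_nonneg K
  rw [hcongr, integral_comp_eq_sum (hξ.prodMk hN)
    fun p => -Real.log (q p) + Real.log (max (q p) (Real.exp (-K)))]
  calc _ ≤ ∑ p : α × β, μ.real (N ⁻¹' {p.2}) * Real.exp (-K) :=
        Finset.sum_le_sum fun p _ => hterm p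
    _ = ∑ _a : α, ∫ _x, Real.exp (-K) ∂μ := by
        rw [Fintype.sum_prod_type]
        simp only [integral_comp_eq_sum hN fun _ => Real.exp (-K)]
    _ = Nat.card α * (μ.real univ * Real.exp (-K)) := by simp

end Information

section Maker

theorem exists_pos_natCast_mul_exp_neg_lt (m : ℕ) {δ : ℝ} (hδ : 0 < δ) :
    ∃ K : ℝ, 0 < K ∧ m * Real.exp (-K) < δ := by
  have hlim : Tendsto (fun K : ℝ => m * Real.exp (-K)) atTop (𝓝 0) := by
    simpa using Real.tendsto_exp_neg_atTop_nhds_zero.const_mul (m : ℝ)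
  exact ((eventually_gt_atTop 0).and (hlim.eventually_lt_const hδ)).exists

theorem sub_le_of_tendsto_of_sub_le {a b : ℕ → ℝ} {c l t : ℝ} (ha : a 0 = 0)
    (hab : ∀ k, a (k + 1) - a k - c ≤ b k) (hb : Tendsto b atTop (𝓝 l))
    (ht : ∀ᶠ n : ℕ in atTop, t ≤ a n / n) : t - c ≤ l := by
  refine ge_of_tendsto hb.cesaro ?_
  filter_upwards [ht, eventually_gt_atTop 0] with n hn hn₀
  have hn₀' : (0 : ℝ) < n := Nat.cast_pos.2 hn₀
  have hsum : a n - n * c ≤ ∑ k ∈ Finset.range n, b k := by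
    have := Finset.sum_le_sum (s := Finset.range n) fun k _ => hab k
    rwa [Finset.sum_sub_distrib, Finset.sum_range_sub, ha, sub_zero, Finset.sum_const,
      Finset.card_range, nsmul_eq_mul] at this
  rw [inv_mul_eq_div, le_div_iff₀ hn₀']
  rw [le_div_iff₀ hn₀'] at hn
  linarith

theorem tendsto_iInf_add_of_tendsto {u : ℕ → ℝ} {a : ℝ} (hu : Tendsto u atTop (𝓝 a)) :
    Tendsto (fun M => ⨅ k, u (M + k)) atTop (𝓝 a) := by
  have hbdd (M : ℕ) : BddBelow (range fun k => u (M + k)) :=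
    hu.bddBelow_range.mono (range_comp_subset_range (fun k => M + k) u)
  refine tendsto_order.2 ⟨fun b hb => ?_, fun b hb => ?_⟩
  · obtain ⟨c, hbc, hca⟩ := exists_between hb
    obtain ⟨M, hM⟩ := eventually_atTop.1 (hu.eventually_const_lt hca)
    filter_upwards [eventually_ge_atTop M] with m hm
    exact hbc.trans_le (le_ciInf fun k => (hM (m + k) (by lia)).le)
  · filter_upwards [hu.eventually_lt_const hb] with m hm
    exact (ciInf_le (hbdd m) 0).trans_lt hm

variable {X : Type*} {f : X → X}

theorem sum_apply_iterate_le {u I : ℕ → X → ℝ} {x : X}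
    (h : ∀ j k, u k (f^[j] x) + I k (f^[j + 1] x) ≤ I (k + 1) (f^[j] x)) (n : ℕ) :
    ∑ j ∈ Finset.range n, u (n - 1 - j) (f^[j] x) + I 0 (f^[n] x) ≤ I n x := by
  induction n generalizing x with
  | zero => simp
  | succ n ih =>
    have hshift : ∑ j ∈ Finset.range n, u (n + 1 - 1 - (j + 1)) (f^[j + 1] x) =
        ∑ j ∈ Finset.range n, u (n - 1 - j) (f^[j] (f x)) :=
      Finset.sum_congr rfl fun j _ => by
        rw [Function.iterate_succ_apply, show n + 1 - 1 - (j + 1) = n - 1 - j by lia]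
    have htail := ih (x := f x) fun j k => by
      simpa only [Function.iterate_succ_apply] using h (j + 1) k
    have hhead := h 0 n
    rw [Finset.sum_range_succ', hshift, Function.iterate_succ_apply]
    simp only [Function.iterate_zero_apply, zero_add, Function.iterate_one, add_tsub_cancel_right,
      tsub_zero] at hhead ⊢
    linarith

variable [MeasurableSpace X] {μ : Measure X} [IsProbabilityMeasure μ]

theorem eventually_mul_lt_sum_of_tendsto (hf : Ergodic f μ) {u : ℕ → X → ℝ} {Ψ : X → ℝ} {K c : ℝ}
    (hu : ∀ k, Measurable (u k)) (hu₀ : ∀ k x, 0 ≤ u k x) (huK : ∀ k x, u k x ≤ K)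
    (hlim : ∀ᵐ x ∂μ, Tendsto (u · x) atTop (𝓝 (Ψ x))) (hc : c < ∫ x, Ψ x ∂μ) :
    ∀ᵐ x ∂μ, ∀ᶠ n : ℕ in atTop, c * n < ∑ j ∈ Finset.range n, u (n - 1 - j) (f^[j] x) := by
  -- As in Maker's theorem, the lower envelope of a tail of `u` reduces the moving index to the
  -- Birkhoff sums of one fixed function.
  set G : ℕ → X → ℝ := fun M x => ⨅ k, u (M + k) x
  have hGle (M k : ℕ) (x : X) (h : M ≤ k) : G M x ≤ u k x := by
    obtain ⟨i, rfl⟩ := Nat.exists_eq_add_of_le h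
    exact ciInf_le ⟨0, forall_mem_range.2 fun k => hu₀ _ x⟩ i
  have hGnorm (M : ℕ) (x : X) : ‖G M x‖ ≤ K := by
    rw [Real.norm_of_nonneg (le_ciInf fun k => hu₀ _ x)]
    exact (hGle M M x le_rfl).trans (huK M x)
  have hGmeas (M : ℕ) : Measurable (G M) := Measurable.iInf fun k => hu (M + k)
  have hGlim : Tendsto (fun M => ∫ x, G M x ∂μ) atTop (𝓝 (∫ x, Ψ x ∂μ)) :=
    tendsto_integral_of_dominated_convergence (fun _ => K)
      (fun M => (hGmeas M).aestronglyMeasurable) (integrable_const K)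
      (fun M => ae_of_all _ (hGnorm M)) (hlim.mono fun x => tendsto_iInf_add_of_tendsto)
  obtain ⟨c', hcc', hc'⟩ := exists_between hc
  obtain ⟨M, hM⟩ := (hGlim.eventually_const_lt hc').exists
  have hint : Integrable (G M) μ :=
    .of_bound (hGmeas M).aestronglyMeasurable K (ae_of_all _ (hGnorm M))
  filter_upwards [tendsto_birkhoffAverage_ae_integral hf hint] with x hx
  rw [← map_add_atTop_eq_nat M, eventually_map]
  filter_upwards [hx.eventually_const_lt hM, eventually_gt_atTop 0,
    tendsto_natCast_atTop_atTop.eventually_gt_atTop (c * M / (c' - c))] with n hn hn₀ hnM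
  have hsum : birkhoffSum f (G M) n x ≤
      ∑ j ∈ Finset.range (n + M), u (n + M - 1 - j) (f^[j] x) :=
    (Finset.sum_le_sum fun j hj => hGle M _ _ (by have := Finset.mem_range.1 hj; lia)).trans
      (Finset.sum_le_sum_of_subset_of_nonneg (Finset.range_mono (Nat.le_add_right n M))
        fun j _ _ => hu₀ _ _)
  rw [birkhoffAverage, smul_eq_mul, inv_mul_eq_div, lt_div_iff₀ (Nat.cast_pos.2 hn₀)] at hn
  rw [div_lt_iff₀ (sub_pos.2 hcc')] at hnM
  push_cast
  linarith

end Maker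

section Itinerary

open ProbabilityTheory

variable {X α : Type*} {f : X → X} {ξ : X → α} {K : ℝ} {n : ℕ}

/-- The first `n` letters of the sequence coding the orbit of `x`, each iterate being recorded by
its label under `ξ`. -/
def itinerary (f : X → X) (ξ : X → α) (n : ℕ) (x : X) : Fin n → α :=
  fun i => ξ (f^[i] x)

theorem itinerary_succ_eq_iff {x y : X} : itinerary f ξ (n + 1) y = itinerary f ξ (n + 1) x ↔
    ξ y = ξ x ∧ itinerary f ξ n (f y) = itinerary f ξ n (f x) := by
  simp [itinerary, funext_iff, Fin.forall_fin_succ, Function.iterate_succ_apply]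

variable [MeasurableSpace X] {μ : Measure X}

theorem information_itinerary_zero [IsProbabilityMeasure μ] (x : X) :
    information μ (itinerary f ξ 0) x = 0 := by
  have huniv : itinerary f ξ 0 ⁻¹' {itinerary f ξ 0 x} = univ :=
    eq_univ_of_forall fun _ => Subsingleton.elim _ _
  simp [information, huniv]

theorem information_itinerary_succ (x : X) : information μ (itinerary f ξ (n + 1)) x =
    information μ (fun y => (ξ y, itinerary f ξ n (f y))) x := by
  rw [information, information]
  congr 3
  ext y
  simpa using itinerary_succ_eq_iff

variable [MeasurableSpace α]

theorem measurable_itinerary (hf : Measurable f) (hξ : Measurable ξ) (n : ℕ) :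
    Measurable (itinerary f ξ n) :=
  measurable_pi_lambda _ fun i => hξ.comp (hf.iterate i)

variable [Finite α] [MeasurableSingletonClass α] [Nonempty α]

/-- The conditional information of the first letter of the itinerary given the next `k` letters,
truncated at height `K`. -/
noncomputable def headInformation (μ : Measure X) [IsFiniteMeasure μ] (f : X → X) (ξ : X → α)
    (K : ℝ) (k : ℕ) (x : X) : ℝ :=
  truncCondInformation μ ξ (fun y => itinerary f ξ k (f y)) K x

theorem measurable_headInformation [IsFiniteMeasure μ] (hf : Measurable f) (hξ : Measurable ξ)
    (K : ℝ) (k : ℕ) : Measurable (headInformation μ f ξ K k) :=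
  measurable_truncCondInformation hξ ((measurable_itinerary hf hξ k).comp hf) K

variable [IsProbabilityMeasure μ]

theorem sum_headInformation_le_information (hf : MeasurePreserving f μ μ) (hξ : Measurable ξ) :
    ∀ᵐ x ∂μ, ∀ n, ∑ j ∈ Finset.range n, headInformation μ f ξ K (n - 1 - j) (f^[j] x) ≤
      information μ (itinerary f ξ n) x := by
  have hN (k : ℕ) := measurable_itinerary hf.measurable hξ k
  have hstep (k : ℕ) : ∀ᵐ x ∂μ, headInformation μ f ξ K k x + information μ (itinerary f ξ k) (f x)
      ≤ information μ (itinerary f ξ (k + 1)) x := by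
    filter_upwards [ae_measureReal_fiber_pos (N := fun y => (ξ y, itinerary f ξ k (f y)))] with x hx
    rw [information_itinerary_succ, ← information_comp hf (hN k) x]
    exact le_sub_iff_add_le.1
      (truncCondInformation_le_information_sub hξ ((hN k).comp hf.measurable) hx)
  filter_upwards [ae_all_iff.2 fun j => ae_all_iff.2 fun k =>
    (hf.iterate j).quasiMeasurePreserving.ae (hstep k)] with x hx n
  have := sum_apply_iterate_le (u := headInformation μ f ξ K)
    (I := fun k => information μ (itinerary f ξ k))
    (fun j k => by simpa only [Function.iterate_succ_apply'] using hx j k) n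
  rwa [information_itinerary_zero, add_zero] at this

theorem exists_tendsto_headInformation (hf : Measurable f) (hξ : Measurable ξ) (K : ℝ) :
    ∃ Ψ : X → ℝ, ∀ᵐ x ∂μ, Tendsto (headInformation μ f ξ K · x) atTop (𝓝 (Ψ x)) := by
  have hN (k : ℕ) := (measurable_itinerary hf hξ k).comp hf
  let ℱ : Filtration ℕ ‹MeasurableSpace X› :=
    { seq k := MeasurableSpace.comap (fun x => itinerary f ξ k (f x)) inferInstance
      mono' k l hkl := by
        change MeasurableSpace.comap ((fun (w : Fin l → α) i => w (Fin.castLE hkl i)) ∘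
          fun x => itinerary f ξ l (f x)) _ ≤ _
        rw [← MeasurableSpace.comap_comp]
        exact MeasurableSpace.comap_mono (measurable_of_finite _).comap_le
      le' k := (hN k).comap_le }
  have hmart : ∀ᵐ x ∂μ, ∀ a, Tendsto (fun k => (μ⟦ξ ⁻¹' {a} | ℱ k⟧) x) atTop
      (𝓝 ((μ⟦ξ ⁻¹' {a} | ⨆ k, ℱ k⟧) x)) :=
    ae_all_iff.2 fun a => tendsto_ae_condExp _
  have hcond : ∀ᵐ x ∂μ, ∀ a k, (condDistrib ξ (fun y => itinerary f ξ k (f y)) μ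
      (itinerary f ξ k (f x))).real {a} = (μ⟦ξ ⁻¹' {a} | ℱ k⟧) x :=
    ae_all_iff.2 fun a => ae_all_iff.2 fun k =>
      condDistrib_ae_eq_condExp (hN k) hξ (measurableSet_singleton a)
  refine ⟨fun x => -Real.log (max ((μ⟦ξ ⁻¹' {ξ x} | ⨆ k, ℱ k⟧) x) (Real.exp (-K))), ?_⟩
  filter_upwards [hmart, hcond] with x hx hxcond
  have hpos := (Real.exp_pos (-K)).trans_le
    (le_max_right ((μ⟦ξ ⁻¹' {ξ x} | ⨆ k, ℱ k⟧) x) (Real.exp (-K)))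
  exact ((((hx (ξ x)).congr fun k => (hxcond (ξ x) k).symm).max
    tendsto_const_nhds).log hpos.ne').neg

theorem integral_information_succ_sub_le_integral_headInformation (hf : MeasurePreserving f μ μ)
    (hξ : Measurable ξ) (hK : 0 ≤ K) (k : ℕ) :
    ∫ x, information μ (itinerary f ξ (k + 1)) x ∂μ - ∫ x, information μ (itinerary f ξ k) x ∂μ -
      Nat.card α * Real.exp (-K) ≤ ∫ x, headInformation μ f ξ K k x ∂μ := by
  have hN := measurable_itinerary hf.measurable hξ k
  have hNf := hN.comp hf.measurable
  have hhead : Integrable (headInformation μ f ξ K k) μ :=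
    .of_bound (measurable_headInformation hf.measurable hξ K k).aestronglyMeasurable K
      (ae_of_all _ (norm_truncCondInformation_le hK))
  have hpair := integrable_information (μ := μ) (hξ.prodMk hNf)
  have hfuture := integrable_information (μ := μ) hNf
  have hsub : ∫ x, (information μ (fun y => (ξ y, itinerary f ξ k (f y))) x -
      information μ (fun y => itinerary f ξ k (f y)) x - headInformation μ f ξ K k x) ∂μ =
        ∫ x, information μ (fun y => (ξ y, itinerary f ξ k (f y))) x ∂μ -
          ∫ x, information μ (fun y => itinerary f ξ k (f y)) x ∂μ -
            ∫ x, headInformation μ f ξ K k x ∂μ :=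
    (integral_sub (hpair.sub hfuture) hhead).trans (congrArg (· - _) (integral_sub hpair hfuture))
  have hinv : ∫ x, information μ (fun y => itinerary f ξ k (f y)) x ∂μ =
      ∫ x, information μ (itinerary f ξ k) x ∂μ := by
    simp only [information_comp hf hN]
    exact integral_comp_of_measurePreserving hf (integrable_information hN).aestronglyMeasurable
  have hloss := integral_information_sub_truncCondInformation_le (μ := μ) hξ hNf K
  rw [probReal_univ, one_mul] at hloss
  simp only [information_itinerary_succ]
  linarith [hsub.symm.trans_le hloss]

theorem ae_eventually_mul_lt_information (hf : Ergodic f μ) (hξ : Measurable ξ) {t t' : ℝ}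
    (ht : ∀ᶠ n : ℕ in atTop, t ≤ (∫ x, information μ (itinerary f ξ n) x ∂μ) / n) (htt : t' < t) :
    ∀ᵐ x ∂μ, ∀ᶠ n : ℕ in atTop, t' * n < information μ (itinerary f ξ n) x := by
  have hp := hf.toMeasurePreserving
  obtain ⟨K, hKpos, hcard⟩ := exists_pos_natCast_mul_exp_neg_lt (Nat.card α) (sub_pos.2 htt)
  have hK := hKpos.le
  obtain ⟨Ψ, hΨ⟩ := exists_tendsto_headInformation (μ := μ) hp.measurable hξ K
  have hmeas (k : ℕ) := measurable_headInformation (μ := μ) hp.measurable hξ K k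
  have hint : Tendsto (fun k => ∫ x, headInformation μ f ξ K k x ∂μ) atTop (𝓝 (∫ x, Ψ x ∂μ)) :=
    tendsto_integral_of_dominated_convergence (fun _ => K)
      (fun k => (hmeas k).aestronglyMeasurable) (integrable_const K)
      (fun k => ae_of_all _ (norm_truncCondInformation_le hK)) hΨ
  have hge : t - Nat.card α * Real.exp (-K) ≤ ∫ x, Ψ x ∂μ :=
    sub_le_of_tendsto_of_sub_le (by simp [information_itinerary_zero])
      (integral_information_succ_sub_le_integral_headInformation hp hξ hK) hint ht
  filter_upwards [sum_headInformation_le_information (K := K) hp hξ,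
    eventually_mul_lt_sum_of_tendsto (c := t') hf hmeas (fun _ => truncCondInformation_nonneg hK)
      (fun _ => truncCondInformation_le) hΨ (by linarith)] with x hsum hx
  filter_upwards [hx] with n hn
  exact hn.trans_le (hsum n)

end Itinerary

section Hamming

variable {ι α : Type*} [Fintype ι] [Fintype α] [DecidableEq α]

theorem sum_exp_neg_mul_hammingDist_le [DecidableEq ι] (L : ℝ) (w₀ : ι → α) :
    ∑ w : ι → α, Real.exp (-(L * hammingDist w w₀)) ≤
      Real.exp (Fintype.card ι * (Fintype.card α * Real.exp (-L))) := by
  have hprod (w : ι → α) : Real.exp (-(L * hammingDist w w₀)) =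
      ∏ i, if w i = w₀ i then 1 else Real.exp (-L) := by
    rw [Finset.prod_ite, Finset.prod_const_one, one_mul, Finset.prod_const, ← Real.exp_nat_mul,
      hammingDist, mul_comm L, mul_neg]
  have hfactor (i : ι) : ∑ a, (if a = w₀ i then 1 else Real.exp (-L)) ≤
      Real.exp (Fintype.card α * Real.exp (-L)) :=
    calc ∑ a, (if a = w₀ i then 1 else Real.exp (-L))
        ≤ ∑ a, ((if a = w₀ i then 1 else 0) + Real.exp (-L)) :=
          Finset.sum_le_sum fun a _ => by split_ifs <;> simp [Real.exp_nonneg]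
      _ = Fintype.card α * Real.exp (-L) + 1 := by simp [Finset.sum_add_distrib, add_comm]
      _ ≤ Real.exp (Fintype.card α * Real.exp (-L)) := Real.add_one_le_exp _
  calc ∑ w : ι → α, Real.exp (-(L * hammingDist w w₀))
      = ∏ i, ∑ a, (if a = w₀ i then 1 else Real.exp (-L)) := by
        simp only [hprod, Fintype.prod_sum]
    _ ≤ ∏ _i : ι, Real.exp (Fintype.card α * Real.exp (-L)) :=
        Finset.prod_le_prod (fun i _ => Finset.sum_nonneg fun a _ => by positivity)
          fun i _ => hfactor i
    _ = Real.exp (Fintype.card ι * (Fintype.card α * Real.exp (-L))) := by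
        rw [Finset.prod_const, Finset.card_univ, ← Real.exp_nat_mul]

theorem card_le_exp_of_hammingDist_le {L D : ℝ} (hL : 0 ≤ L) (w₀ : ι → α) {S : Finset (ι → α)}
    (hS : ∀ w ∈ S, (hammingDist w w₀ : ℝ) ≤ D) :
    (S.card : ℝ) ≤ Real.exp (L * D + Fintype.card ι * (Fintype.card α * Real.exp (-L))) := by
  classical
  have := calc S.card * Real.exp (-(L * D)) = ∑ _w ∈ S, Real.exp (-(L * D)) := by simp
    _ ≤ ∑ w ∈ S, Real.exp (-(L * hammingDist w w₀)) :=
        Finset.sum_le_sum fun w hw => Real.exp_le_exp.2 (by gcongr; exact hS w hw)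
    _ ≤ ∑ w, Real.exp (-(L * hammingDist w w₀)) :=
        Finset.sum_le_univ_sum_of_nonneg fun _ => Real.exp_nonneg _
    _ ≤ _ := sum_exp_neg_mul_hammingDist_le L w₀
  rwa [Real.exp_neg, ← div_eq_mul_inv, div_le_iff₀ (Real.exp_pos _), ← Real.exp_add,
    add_comm] at this

theorem exists_pos_forall_ncard_le_exp (α : Type*) [Finite α] [DecidableEq α] {η : ℝ}
    (hη : 0 < η) : ∃ θ > 0, ∀ (n : ℕ) (S : Set (Fin n → α)),
      (∀ w ∈ S, ∀ w' ∈ S, (hammingDist w w' : ℝ) ≤ θ * n) → S.ncard ≤ Real.exp (η * n) := by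
  have := Fintype.ofFinite α
  obtain ⟨L, hL, hcard⟩ := exists_pos_natCast_mul_exp_neg_lt (Fintype.card α) (half_pos hη)
  refine ⟨η / 2 / L, by positivity, fun n S hS => ?_⟩
  rcases S.eq_empty_or_nonempty with rfl | ⟨w₀, hw₀⟩
  · simp [Real.exp_nonneg]
  have hball := card_le_exp_of_hammingDist_le hL.le w₀ (S := S.toFinite.toFinset)
    fun w hw => hS w (S.toFinite.mem_toFinset.1 hw) w₀ hw₀
  rw [ncard_eq_toFinset_card S]
  refine hball.trans (Real.exp_le_exp.2 ?_)
  rw [Fintype.card_fin, ← mul_assoc, mul_div_cancel₀ _ hL.ne']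
  nlinarith [n.cast_nonneg (α := ℝ)]

end Hamming

section KatokBound

theorem measure_le_ncard_mul_of_measure_fiber_le {X β : Type*} [Finite β] [MeasurableSpace X]
    {μ : Measure X} {N : X → β} {B : Set X} {c : ℝ≥0∞} (h : ∀ y ∈ B, μ (N ⁻¹' {N y}) ≤ c) :
    μ B ≤ (N '' B).ncard * c := by
  have hfin := (N '' B).toFinite
  calc μ B ≤ μ (⋃ w ∈ hfin.toFinset, N ⁻¹' {w}) :=
        measure_mono fun y hy => mem_iUnion₂.2 ⟨N y, hfin.mem_toFinset.2 ⟨y, hy, rfl⟩, rfl⟩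
    _ ≤ ∑ w ∈ hfin.toFinset, μ (N ⁻¹' {w}) := measure_biUnion_finset_le _ _
    _ ≤ ∑ _w ∈ hfin.toFinset, c := Finset.sum_le_sum fun w hw => by
        obtain ⟨y, hy, rfl⟩ := hfin.mem_toFinset.1 hw
        exact h y hy
    _ = (N '' B).ncard * c := by
        rw [Finset.sum_const, nsmul_eq_mul, ncard_eq_toFinset_card _ hfin]

theorem hammingDist_itinerary_le {X α : Type*} [DecidableEq α] {f : X → X} {ξ : X → α} {U : Set X}
    {n : ℕ} {y z : X} (h : ∀ i < n, f^[i] y ∉ U → f^[i] z ∉ U → ξ (f^[i] y) = ξ (f^[i] z)) :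
    (hammingDist (itinerary f ξ n y) (itinerary f ξ n z) : ℝ) ≤
      birk f (U.indicator 1) n y + birk f (U.indicator 1) n z := by
  classical
  rw [hammingDist, Finset.card_filter, birk, birk, ← Finset.sum_add_distrib, Finset.sum_range]
  push_cast
  refine Finset.sum_le_sum fun i _ => ?_
  have := h i i.2
  by_cases hy : f^[i] y ∈ U <;> by_cases hz : f^[i] z ∈ U <;>
    by_cases hyz : ξ (f^[i] y) = ξ (f^[i] z) <;> simp_all [itinerary]

variable {X α : Type*} [MetricSpace X]

theorem exists_pos_forall_le_dist_of_pairwise_disjoint [Finite α] {C : α → Set X}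
    (hC : ∀ a, IsCompact (C a)) (hdisj : Pairwise (Function.onFun Disjoint C)) :
    ∃ ε > 0, ∀ a b, a ≠ b → ∀ x ∈ C a, ∀ y ∈ C b, ε ≤ dist x y := by
  have hpair (p : α × α) : ∀ᶠ ε in 𝓝[>] (0 : ℝ),
      p.1 ≠ p.2 → ∀ x ∈ C p.1, ∀ y ∈ C p.2, ε ≤ dist x y := by
    by_cases hp : p.1 = p.2
    · exact Eventually.of_forall fun _ h => absurd hp h
    obtain ⟨r, hr, hrC⟩ :=
      Metric.exists_pos_forall_lt_edist (hC p.1) (hC p.2).isClosed (hdisj hp)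
    filter_upwards [Ioo_mem_nhdsGT (NNReal.coe_pos.2 hr)] with ε hε _ x hx y hy
    have := hrC x hx y hy
    rw [edist_nndist, ENNReal.coe_lt_coe] at this
    exact hε.2.le.trans (NNReal.coe_le_coe.2 this.le)
  obtain ⟨ε, hε, hpos⟩ := ((eventually_all.2 hpair).and self_mem_nhdsWithin).exists
  exact ⟨ε, hpos, fun a b => hε (a, b)⟩

variable [MeasurableSpace X] [BorelSpace X] [MeasurableSpace α] [MeasurableSingletonClass α]
  [Finite α] {μ : Measure X} {ξ : X → α}

theorem exists_measureReal_le_forall_dist_lt_imp_eq [IsFiniteMeasure μ]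
    [μ.InnerRegularCompactLTTop] (hξ : Measurable ξ) {δ : ℝ} (hδ : 0 < δ) :
    ∃ U, MeasurableSet U ∧ μ.real U ≤ δ ∧
      ∃ ε > 0, ∀ x ∉ U, ∀ y ∉ U, dist x y < ε → ξ x = ξ y := by
  have := Fintype.ofFinite α
  have hcompact (a : α) : ∃ C ⊆ ξ ⁻¹' {a}, IsCompact C ∧
      μ (ξ ⁻¹' {a} \ C) < ENNReal.ofReal (δ / (Fintype.card α + 1)) :=
    (hξ (measurableSet_singleton a)).exists_isCompact_sdiff_lt (measure_ne_top _ _)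
      (ENNReal.ofReal_pos.2 (by positivity)).ne'
  choose C hCξ hC hCμ using hcompact
  have hmem {a : α} {x : X} (hx : x ∈ C a) : ξ x = a := hCξ a hx
  obtain ⟨ε, hε, hdist⟩ := exists_pos_forall_le_dist_of_pairwise_disjoint hC fun a b hab =>
    disjoint_left.2 fun x hxa hxb => hab ((hmem hxa).symm.trans (hmem hxb))
  refine ⟨(⋃ a, C a)ᶜ, (MeasurableSet.iUnion fun a => (hC a).measurableSet).compl, ?_, ε, hε,
    fun x hx y hy hxy => ?_⟩
  · calc μ.real (⋃ a, C a)ᶜ ≤ μ.real (⋃ a, ξ ⁻¹' {a} \ C a) := measureReal_mono fun x hx =>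
          mem_iUnion.2 ⟨ξ x, rfl, fun h => hx (mem_iUnion.2 ⟨_, h⟩)⟩
      _ ≤ ∑ a, μ.real (ξ ⁻¹' {a} \ C a) := measureReal_iUnion_fintype_le _
      _ ≤ ∑ _a : α, δ / (Fintype.card α + 1) := Finset.sum_le_sum fun a _ =>
          ENNReal.toReal_le_of_le_ofReal (by positivity) (hCμ a).le
      _ = Fintype.card α * δ / (Fintype.card α + 1) := by
          rw [Finset.sum_const, Finset.card_univ, nsmul_eq_mul, mul_div_assoc]
      _ ≤ δ := by
          rw [div_le_iff₀ (by positivity)]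
          linarith
  · obtain ⟨a, hxa⟩ := mem_iUnion.1 (notMem_compl_iff.1 hx)
    obtain ⟨b, hyb⟩ := mem_iUnion.1 (notMem_compl_iff.1 hy)
    by_contra hne
    rw [hmem hxa, hmem hyb] at hne
    exact (hdist a b hne x hxa y hyb).not_gt hxy

theorem sub_le_Pmu_zero_of_eventually_mul_lt_information [IsProbabilityMeasure μ]
    [μ.InnerRegularCompactLTTop] {f : X → X} (hf : Ergodic f μ) (hξ : Measurable ξ) {t η : ℝ}
    (hη : 0 < η)
    (ht : ∀ᵐ x ∂μ, ∀ᶠ n : ℕ in atTop, t * n < information μ (itinerary f ξ n) x) :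
    ((t - η : ℝ) : EReal) ≤ Pmu f 0 μ := by
  classical
  obtain ⟨θ, hθ, hcard⟩ := exists_pos_forall_ncard_le_exp α hη
  obtain ⟨U, hU, hμU, ε, hε, hξU⟩ :=
    exists_measureReal_le_forall_dist_lt_imp_eq (μ := μ) hξ (show 0 < θ / 4 by positivity)
  have hvisit : ∀ᵐ x ∂μ, ∀ᶠ n : ℕ in atTop, birk f (U.indicator 1) n x ≤ θ / 2 * n := by
    filter_upwards [tendsto_birkhoffAverage_ae_integral hf ((integrable_indicator_iff hU).2
      (integrable_const (1 : ℝ)).integrableOn)] with x hx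
    rw [integral_indicator_const _ hU, smul_eq_mul, mul_one] at hx
    filter_upwards [hx.eventually_lt_const (u := θ / 2) (by linarith), eventually_gt_atTop 0]
      with n hn hn₀
    rw [← birk_div_eq_birkhoffAverage, div_lt_iff₀ (Nat.cast_pos.2 hn₀)] at hn
    exact hn.le
  obtain ⟨M, hM⟩ := frequently_exists_iff.1 ((ht.and hvisit).mono fun x hx =>
    eventually_atTop.1 (hx.1.and hx.2)).frequently
  refine le_Pmu_of_measure_bowenBall_inter_le (N := M) (half_pos hε) (frequently_ae_iff.1 hM)
    fun x n hn => ?_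
  set B := bowenBall f x n (ε / 2) ∩ _
  have hdist (y : X) (hy : y ∈ B) (z : X) (hz : z ∈ B) :
      (hammingDist (itinerary f ξ n y) (itinerary f ξ n z) : ℝ) ≤ θ * n := by
    refine (hammingDist_itinerary_le (U := U) fun i hi hyU hzU => hξU _ hyU _ hzU ?_).trans
      (by linarith [(hy.2 n hn).2, (hz.2 n hn).2])
    linarith [dist_triangle_left (f^[i] y) (f^[i] z) (f^[i] x), hy.1 i hi, hz.1 i hi]
  have hfiber := measure_le_ncard_mul_of_measure_fiber_le (μ := μ) (N := itinerary f ξ n) (B := B)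
    fun y hy => measure_fiber_le_ofReal_exp_neg (hy.2 n hn).1.le
  refine hfiber.trans ?_
  rw [bowenWeight, birk_zero, add_zero, ← ENNReal.ofReal_natCast,
    ← ENNReal.ofReal_mul (Nat.cast_nonneg _)]
  refine ENNReal.ofReal_le_ofReal ?_
  calc _ ≤ Real.exp (η * n) * Real.exp (-(t * n)) := by
        gcongr
        exact hcard n _ (forall_mem_image.2 fun y hy => forall_mem_image.2 (hdist y hy))
    _ = Real.exp (-(t - η) * n) := by
        rw [← Real.exp_add]
        ring_nf

end KatokBound

section Partition

variable {X β : Type*} [MeasurableSpace X] [MeasurableSpace β] [MeasurableSingletonClass β]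
  {f : X → X} {μ : Measure X} {s : Finset (Set X)}

theorem IsFinPartition.exists_measurable_cell (hs : IsFinPartition s) :
    ∃ ξ : X → Fin s.card, Measurable ξ ∧ ∀ x a, ξ x = a ↔ x ∈ (s.equivFin.symm a : Set X) := by
  have hcover (x : X) : ∃ A : {A // A ∈ s}, x ∈ (A : Set X) := by
    obtain ⟨A, hA, hx⟩ := mem_sUnion.1 (hs.2.1 ▸ mem_univ x)
    exact ⟨⟨A, hA⟩, hx⟩
  choose cell hcell using hcover
  have hiff (x : X) (a : Fin s.card) :
      s.equivFin (cell x) = a ↔ x ∈ (s.equivFin.symm a : Set X) := by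
    rw [← Equiv.eq_symm_apply]
    refine ⟨fun h => h ▸ hcell x, fun hx => ?_⟩
    exact Subtype.ext (hs.2.2.eq (cell x).2 (s.equivFin.symm a).2
      (not_disjoint_iff.2 ⟨x, hcell x, hx⟩))
  refine ⟨fun x => s.equivFin (cell x), measurable_to_countable' fun a => ?_, hiff⟩
  convert hs.1 _ (s.equivFin.symm a).2
  exact Set.ext fun x => hiff x a

theorem dynH_eq_integral_information [IsFiniteMeasure μ] (hf : Measurable f) {ξ : X → Fin s.card}
    (hξ : Measurable ξ) (hcell : ∀ x a, ξ x = a ↔ x ∈ (s.equivFin.symm a : Set X)) (n : ℕ) :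
    dynH f μ s n = ∫ x, information μ (itinerary f ξ n) x ∂μ := by
  unfold information
  rw [integral_comp_eq_sum (measurable_itinerary hf hξ n)
    fun w => -Real.log (μ.real (itinerary f ξ n ⁻¹' {w})), dynH, ← Finset.sum_neg_distrib]
  refine Fintype.sum_equiv (Equiv.piCongrRight fun _ => s.equivFin) _ _ fun w => ?_
  have hcylinder : ⋂ i : Fin n, f^[i] ⁻¹' (w i : Set X) =
      itinerary f ξ n ⁻¹' {Equiv.piCongrRight (fun _ => s.equivFin) w} := by
    ext x
    simp [itinerary, funext_iff, hcell]
  rw [hcylinder, measureReal_def, mul_neg]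

theorem isFinPartition_range_fiber [Finite β] {N : X → β} (hN : Measurable N) :
    IsFinPartition (toFinite (range fun w => N ⁻¹' {w})).toFinset := by
  refine ⟨fun A hA => ?_, eq_univ_of_forall fun x => mem_sUnion.2 ⟨N ⁻¹' {N x}, ?_, rfl⟩, ?_⟩
  · obtain ⟨w, rfl⟩ := (toFinite _).mem_toFinset.1 hA
    exact hN (measurableSet_singleton w)
  · simp
  · rw [Finite.coe_toFinset]
    rintro _ ⟨w, rfl⟩ _ ⟨w', rfl⟩ hne
    refine disjoint_left.2 fun x hx hx' => hne ?_
    rw [← mem_singleton_iff.1 hx, mem_singleton_iff.1 hx']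

theorem exists_isFinPartition_forall_dist_lt {X : Type*} [MetricSpace X] [CompactSpace X]
    [MeasurableSpace X] [OpensMeasurableSpace X] {ε : ℝ} (hε : 0 < ε) :
    ∃ s : Finset (Set X), IsFinPartition s ∧ ∀ A ∈ s, ∀ x ∈ A, ∀ y ∈ A, dist x y < ε := by
  obtain ⟨T, -, hT, hcover⟩ := Metric.finite_approx_of_totallyBounded
    (isCompact_univ (X := X)).totallyBounded (ε / 2) (half_pos hε)
  have := hT.to_subtype
  let near (x : X) (c : T) : Prop := dist x c < ε / 2
  have hnear : Measurable near := measurable_pi_lambda _ fun c =>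
    measurableSet_setOfPred.1 (Metric.isOpen_ball (x := (c : X))).measurableSet
  refine ⟨_, isFinPartition_range_fiber hnear, fun A hA x hx y hy => ?_⟩
  obtain ⟨w, rfl⟩ := (toFinite _).mem_toFinset.1 hA
  obtain ⟨c, hc, hxc⟩ := mem_iUnion₂.1 (hcover (mem_univ x))
  have hyc : near y ⟨c, hc⟩ := (congrFun (hy.trans hx.symm) ⟨c, hc⟩).mpr hxc
  linarith [dist_triangle_right x y c, Metric.mem_ball.1 hxc, show dist y c < ε / 2 from hyc]

end Partition

section KolmogorovSinai

variable {X : Type*} [MeasurableSpace X] {μ : Measure X} [IsProbabilityMeasure μ]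

theorem le_liminf_integral_of_ae_eventually_le {F : ℕ → X → ℝ} {t : ℝ}
    (hF : ∀ n, Integrable (F n) μ) (hF₀ : ∀ n x, 0 ≤ F n x)
    (ht : ∀ᵐ x ∂μ, ∀ᶠ n in atTop, t ≤ F n x) :
    (t : EReal) ≤ liminf (fun n => ((∫ x, F n x ∂μ : ℝ) : EReal)) atTop := by
  have hint (n : ℕ) : Integrable (fun x => min (F n x) t) μ := (hF n).inf (integrable_const t)
  have hbound (n : ℕ) (x : X) : ‖min (F n x) t‖ ≤ |t| :=
    abs_le.2 ⟨le_min (by linarith [abs_nonneg t, hF₀ n x]) (neg_abs_le t),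
      (min_le_right _ _).trans (le_abs_self t)⟩
  have hlim : Tendsto (fun n => ∫ x, min (F n x) t ∂μ) atTop (𝓝 (∫ _, t ∂μ)) :=
    tendsto_integral_of_dominated_convergence (fun _ => |t|)
      (fun n => (hint n).aestronglyMeasurable) (integrable_const _)
      (fun n => ae_of_all _ (hbound n)) (ht.mono fun x hx =>
        tendsto_const_nhds.congr' (hx.mono fun n hn => (min_eq_right hn).symm))
  rw [integral_const, probReal_univ, one_smul] at hlim
  rw [← ((continuous_coe_real_ereal.tendsto t).comp hlim).liminf_eq]
  exact liminf_le_liminf (Eventually.of_forall fun n =>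
    EReal.coe_le_coe (integral_mono (hint n) (hF n) fun x => min_le_left _ _))

variable [MetricSpace X] {f : X → X}

theorem ae_eventually_mul_le_information {α : Type*} [Finite α] {ξ : X → α} {t ε : ℝ}
    (hξ : ∀ x y, ξ x = ξ y → dist x y < ε) (ht : ∀ᵐ x ∂μ, (t : EReal) < localPressure f 0 μ ε x) :
    ∀ᵐ x ∂μ, ∀ᶠ n : ℕ in atTop, t * n ≤ information μ (itinerary f ξ n) x := by
  filter_upwards [ht, ae_all_iff.2 fun n => ae_measureReal_fiber_pos (N := itinerary f ξ n)]
    with x hx hpos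
  filter_upwards [eventually_measure_bowenBall_lt hx] with n hn
  have hfiber : itinerary f ξ n ⁻¹' {itinerary f ξ n x} ⊆ bowenBall f x n ε := fun y hy i hi =>
    hξ _ _ (congrFun hy ⟨i, hi⟩).symm
  rw [bowenWeight, birk_zero, add_zero, neg_mul] at hn
  exact le_information_of_measure_fiber_le (hpos n) ((measure_mono hfiber).trans hn.le)

variable [CompactSpace X] [BorelSpace X]

theorem le_ksEntropy_of_ae_lt_localPressure (hf : Measurable f) {t ε : ℝ} (hε : 0 < ε)
    (ht : ∀ᵐ x ∂μ, (t : EReal) < localPressure f 0 μ ε x) : (t : EReal) ≤ ksEntropy f μ := by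
  obtain ⟨s, hs, hdiam⟩ := exists_isFinPartition_forall_dist_lt (X := X) hε
  obtain ⟨ξ, hξ, hcell⟩ := hs.exists_measurable_cell
  have hinfo := ae_eventually_mul_le_information (ξ := ξ) (fun x y hxy =>
    hdiam _ (s.equivFin.symm (ξ x)).2 x ((hcell _ _).1 rfl) y ((hcell _ _).1 hxy.symm)) ht
  refine (le_liminf_integral_of_ae_eventually_le
    (fun n => (integrable_information (measurable_itinerary hf hξ n)).div_const (n : ℝ))
    (fun n x => div_nonneg (information_nonneg (μ := μ) _ x) n.cast_nonneg) ?_).trans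
    (le_iSup₂_of_le s hs (le_of_eq ?_))
  · filter_upwards [hinfo] with x hx
    filter_upwards [hx, eventually_gt_atTop 0] with n hn hn₀
    exact (le_div_iff₀ (Nat.cast_pos.2 hn₀)).2 hn
  · simp only [integral_div, dynH_eq_integral_information hf hξ hcell]

theorem ksEntropy_le_Pmu_zero (hf : Ergodic f μ) : ksEntropy f μ ≤ Pmu f 0 μ := by
  refine iSup₂_le fun s hs => le_of_forall_lt fun c hc => ?_
  obtain ⟨ξ, hξ, hcell⟩ := hs.exists_measurable_cell
  have : Nonempty (Fin s.card) := μ.nonempty_of_neZero.map ξ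
  obtain ⟨r, hcr, hr⟩ := EReal.lt_iff_exists_real_btwn.1 hc
  obtain ⟨t, hrt, ht⟩ := EReal.lt_iff_exists_real_btwn.1 hr
  obtain ⟨t', hrt', htt'⟩ := exists_between (EReal.coe_lt_coe_iff.1 hrt)
  have hrate : ∀ᶠ n : ℕ in atTop, t ≤ (∫ x, information μ (itinerary f ξ n) x ∂μ) / n := by
    filter_upwards [eventually_lt_of_lt_liminf ht] with n hn
    rw [← dynH_eq_integral_information hf.measurable hξ hcell]
    exact (EReal.coe_lt_coe_iff.1 hn).le
  have := sub_le_Pmu_zero_of_eventually_mul_lt_information hf hξ (sub_pos.2 hrt')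
    (ae_eventually_mul_lt_information hf hξ hrate htt')
  rw [sub_sub_cancel] at this
  exact hcr.trans_le this

theorem Pmu_zero_eq_ksEntropy (hf : Continuous f) (hμ : Ergodic f μ) :
    Pmu f 0 μ = ksEntropy f μ := by
  refine (ksEntropy_le_Pmu_zero hμ).antisymm' (le_of_forall_lt fun c hc => ?_)
  rw [Pmu_eq_essSup_ptPressure (φ := 0) hf uniformContinuous_const] at hc
  obtain ⟨t, hct, ht⟩ := EReal.lt_iff_exists_real_btwn.1 hc
  obtain ⟨ε, hε, hlt⟩ := exists_ae_lt_localPressure hf hμ measurable_const ht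
  exact hct.trans_le (le_ksEntropy_of_ae_lt_localPressure hf.measurable hε hlt)

end KolmogorovSinai

section PointwisePressure

variable {X : Type*} [MetricSpace X] [MeasurableSpace X] {μ : Measure X} [IsProbabilityMeasure μ]
  {f : X → X} {φ : X → ℝ}

theorem ae_ptPressure_eq_localEntropy_add_limUnder (hf : MeasurePreserving f μ μ)
    (hφ : Integrable φ μ) :
    ∀ᵐ x ∂μ, ptPressure f φ μ x = localEntropy f μ x +
      ((limUnder atTop fun n : ℕ => birk f φ n x / n : ℝ) : EReal) := by
  filter_upwards [tendsto_birkhoffAverage_ae_condExp hf hφ] with x hx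
  simp only [← birk_div_eq_birkhoffAverage] at hx
  rw [hx.limUnder_eq, ptPressure_eq_localEntropy_add_of_tendsto hx]

variable [CompactSpace X] [BorelSpace X]

theorem ae_ptPressure_eq_Pmu (hf : Continuous f) (hμ : Ergodic f μ) (hφ : Continuous φ) :
    ∀ᵐ x ∂μ, ptPressure f φ μ x = Pmu f φ μ := by
  rw [Pmu_eq_essSup_ptPressure hf (CompactSpace.uniformContinuous_of_continuous hφ)]
  have hrat : ∀ᵐ x ∂μ, ∀ q : ℚ, ((q : ℝ) : EReal) < essSup (ptPressure f φ μ) μ →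
      ((q : ℝ) : EReal) < ptPressure f φ μ x := by
    refine ae_all_iff.2 fun q => eventually_imp_distrib_left.2 fun hq => ?_
    obtain ⟨ε, hε, hlt⟩ := exists_ae_lt_localPressure hf hμ hφ.measurable hq
    exact hlt.mono fun x hx => hx.trans_le (localPressure_le_ptPressure f φ μ hε x)
  filter_upwards [hrat, ae_le_essSup (f := ptPressure f φ μ) (μ := μ)] with x hx hle
  refine hle.antisymm (le_of_forall_lt fun c hc => ?_)
  obtain ⟨q, hcq, hq⟩ := EReal.lt_iff_exists_rat_btwn.1 hc
  exact hcq.trans (hx q hq)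

theorem ae_ptPressure_eq_ksEntropy_add_integral (hf : Continuous f) (hμ : Ergodic f μ)
    (hφ : Integrable φ μ) :
    ∀ᵐ x ∂μ, ptPressure f φ μ x = ksEntropy f μ + ((∫ x, φ x ∂μ : ℝ) : EReal) := by
  filter_upwards [tendsto_birkhoffAverage_ae_integral hμ hφ,
    ae_ptPressure_eq_Pmu hf hμ continuous_zero] with x hx hentropy
  simp only [← birk_div_eq_birkhoffAverage] at hx
  rw [ptPressure_eq_localEntropy_add_of_tendsto hx, localEntropy_eq_ptPressure_zero, hentropy,
    Pmu_zero_eq_ksEntropy hf hμ]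

end PointwisePressure

end Paper

/-- Corollary 4.3: `P_μ(f,φ) = ess sup {h_μ(x) + φ*(x)}` (essential supremum w.r.t.
`μ`, where `φ*(x)` is the Birkhoff average, which exists `μ`-a.e.); and if `μ` is
ergodic then `P_μ(f,φ,x) = P_μ(f,φ) = h_μ(f) + ∫φ dμ` for `μ`-a.e. `x`. -/
theorem pressure_eq_essSup_localEntropy_add_birkhoffAvg {X : Type*} [MetricSpace X] [CompactSpace X] [MeasurableSpace X] [BorelSpace X]
    (f : X → X) (hf : Continuous f) (φ : X → ℝ) (hφ : Continuous φ)
    (μ : Measure X) (hp : IsProbabilityMeasure μ) (hinv : MeasurePreserving f μ μ) :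
    Pmu f φ μ = essSup (fun x => localEntropy f μ x +
        ((limUnder Filter.atTop (fun n : ℕ => birk f φ n x / (n : ℝ)) : ℝ) : EReal)) μ ∧
    (Ergodic f μ →
      Pmu f φ μ = ksEntropy f μ + ((∫ x, φ x ∂μ : ℝ) : EReal) ∧
      ∀ᵐ x ∂μ, ptPressure f φ μ x = Pmu f φ μ) := by
  have hφμ : Integrable φ μ := hφ.integrable_of_hasCompactSupport (.of_compactSpace φ)
  have hessSup : Pmu f φ μ = essSup (ptPressure f φ μ) μ :=
    Pmu_eq_essSup_ptPressure hf (CompactSpace.uniformContinuous_of_continuous hφ)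
  refine ⟨hessSup.trans
    (essSup_congr_ae (ae_ptPressure_eq_localEntropy_add_limUnder hinv hφμ)), fun hμ => ⟨?_, ?_⟩⟩
  · rw [hessSup, essSup_congr_ae (ae_ptPressure_eq_ksEntropy_add_integral hf hμ hφμ),
      essSup_const _ (IsProbabilityMeasure.ne_zero μ)]
  · exact ae_ptPressure_eq_Pmu hf hμ hφ
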